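/- arXiv:math/0003123 — 4 statements merged into one kernel-verified Lean document; each statement's English description precedes it below -/
import Mathlib

section
/- Let g be a finite-dimensional complex semisimple Lie algebra with simple ideals g_1, …, g_n. (a) Every g-invariant ℝ-bilinear form B on g (g regarded as a real Lie algebra) is of the form B(X,Y) = Σ_{i=1}^{n} Im(λ_i K_{g_i}(X_i, Y_i)) for some λ = (λ_1,…,λ_n) ∈ ℂ^n, where X_i, Y_i denote the components of X, Y in g_i and K_{g_i} is the Killing form of g_i. (b) Every g-invariant ℂ-bilinear form on g is of the form K_λ(X,Y) = Σ_{i=1}^{n} λ_i K_{g_i}(X_i, Y_i) for some λ ∈ ℂ^n. In particular, every such form is symmetric and the simple ideals g_1, …, g_n are pairwise orthogonal for it. -/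
open Module

/-- A subspace containing all brackets of a simple Lie algebra is everything. -/
lemma simple_mem_of_brackets {L : Type*} [LieRing L] [LieAlgebra ℂ L]
    (hs : LieAlgebra.IsSimple ℂ L) (S : Submodule ℂ L) (h : ∀ a b : L, ⁅a, b⁆ ∈ S) (x : L) :
    x ∈ S := by
  rcases hs.eq_bot_or_eq_top ⁅(⊤ : LieIdeal ℂ L), (⊤ : LieIdeal ℂ L)⁆ with h0 | h1
  · exfalso
    apply hs.non_abelian
    constructor
    intro a b
    have : ⁅a, b⁆ ∈ ⁅(⊤ : LieIdeal ℂ L), (⊤ : LieIdeal ℂ L)⁆ :=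
      LieSubmodule.lie_mem_lie (LieSubmodule.mem_top _) (LieSubmodule.mem_top _)
    rw [h0] at this
    simpa using this
  · have hx : x ∈ (⁅(⊤ : LieIdeal ℂ L), (⊤ : LieIdeal ℂ L)⁆ : LieIdeal ℂ L).toSubmodule := by
      rw [h1]; exact LieSubmodule.mem_top _
    rw [LieSubmodule.lieIdeal_oper_eq_linear_span'] at hx
    refine Submodule.span_le.2 ?_ hx
    rintro _ ⟨a, -, b, -, rfl⟩
    exact h a b

/-- Schur: an invariant form on a simple complex Lie algebra is a multiple of Killing. -/
lemma simple_invariant_form {L : Type*} [LieRing L] [LieAlgebra ℂ L] [Module.Finite ℂ L]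
    (hs : LieAlgebra.IsSimple ℂ L) (K : L →ₗ[ℂ] L →ₗ[ℂ] ℂ)
    (hK : ∀ Z X Y : L, K ⁅Z, X⁆ Y + K X ⁅Z, Y⁆ = 0) :
    ∃ c : ℂ, ∀ X Y, K X Y = c * killingForm ℂ L X Y := by
  have hnt : Nontrivial L := LieAlgebra.IsSimple.nontrivial ℂ L
  have hnd : (killingForm ℂ L).Nondegenerate :=
    LieAlgebra.IsKilling.killingForm_nondegenerate ℂ L
  let D := LinearMap.BilinForm.toDual (killingForm ℂ L) hnd
  let T : Module.End ℂ L := D.symm.toLinearMap ∘ₗ K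
  have hT : ∀ x y, killingForm ℂ L (T x) y = K x y := by
    intro x y
    have : D (T x) = K x := D.apply_symm_apply _
    rw [← this]
    exact (LinearMap.BilinForm.toDual_def hnd).symm
  have hinv : ∀ z x y : L, killingForm ℂ L ⁅z, x⁆ y = - killingForm ℂ L x ⁅z, y⁆ := by
    intro z x y
    rw [← lie_skew, map_neg, LinearMap.neg_apply]
    exact congrArg Neg.neg (LieModule.traceForm_apply_lie_apply ℂ L L x z y)
  have hcomm : ∀ z x : L, T ⁅z, x⁆ = ⁅z, T x⁆ := by
    intro z x
    rw [← sub_eq_zero]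
    apply hnd.1
    intro y
    rw [map_sub, LinearMap.sub_apply, hT, hinv, hT]
    linear_combination hK z x y
  obtain ⟨c, hc⟩ := Module.End.exists_eigenvalue T
  let J : LieIdeal ℂ L :=
    { Module.End.eigenspace T c with
      lie_mem := by
        intro z x hx
        have hx' : x ∈ Module.End.eigenspace T c := hx
        change ⁅z, x⁆ ∈ Module.End.eigenspace T c
        rw [Module.End.mem_eigenspace_iff] at hx' ⊢
        rw [hcomm, hx', lie_smul] }
  have hJ : ∀ x, x ∈ J ↔ T x = c • x := fun x => Module.End.mem_eigenspace_iff
  obtain ⟨v, hv⟩ := hc.exists_hasEigenvector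
  have htop : J = ⊤ := by
    refine (hs.eq_bot_or_eq_top J).resolve_left ?_
    intro hb
    have : v ∈ J := hv.1
    rw [hb] at this
    exact hv.2 (by simpa using this)
  refine ⟨c, fun X Y => ?_⟩
  have : T X = c • X := (hJ X).1 (htop ▸ LieSubmodule.mem_top X)
  rw [← hT, this, map_smul, LinearMap.smul_apply, smul_eq_mul]

/-- Lemma 1 (i) of Delorme, "Classification des triples de Manin".
Let `g` be a finite dimensional complex semisimple Lie algebra with simple ideals
`I 0, …, I (n-1)` (with associated projections `π k` onto the ideals).
(a) Every `g`-invariant `ℝ`-bilinear form `B` on `g` is of the form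
`B X Y = ∑ k, Im (λ k * K_{g_k} (X_k, Y_k))` for some `λ : Fin n → ℂ`, where `X_k, Y_k`
are the components of `X, Y` in the ideal `I k` and `K_{g_k}` is the Killing form of `I k`.
(b) Every `g`-invariant `ℂ`-bilinear form is of the form
`K X Y = ∑ k, λ k * K_{g_k} (X_k, Y_k)`.
In particular such forms are symmetric, and the simple ideals are pairwise orthogonal. -/
theorem invariant_forms_on_complex_semisimple
    (g : Type*) [LieRing g] [LieAlgebra ℝ g] [LieAlgebra ℂ g] [IsScalarTower ℝ ℂ g]
    [FiniteDimensional ℂ g] [LieAlgebra.IsSemisimple ℂ g]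
    (n : ℕ) (I : Fin n → LieIdeal ℂ g) [∀ k, Module.Finite ℂ (I k)]
    (hsimple : ∀ k, LieAlgebra.IsSimple ℂ (I k))
    (hinj : Function.Injective I)
    (hall : ∀ J : LieIdeal ℂ g, LieAlgebra.IsSimple ℂ J → ∃ k, I k = J)
    (π : Fin n → (g →ₗ[ℂ] g))
    (hmem : ∀ k x, π k x ∈ I k)
    (hsum : ∀ x : g, ∑ k, π k x = x)
    (hproj : ∀ k, ∀ x ∈ I k, π k x = x)
    (hzero : ∀ k l, k ≠ l → ∀ x ∈ I l, π k x = 0) :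
    (∀ B : g →ₗ[ℝ] g →ₗ[ℝ] ℝ, (∀ Z X Y : g, B ⁅Z, X⁆ Y + B X ⁅Z, Y⁆ = 0) →
      (∃ lam : Fin n → ℂ, ∀ X Y : g,
        B X Y =
          ∑ k, (lam k * killingForm ℂ (I k) ⟨π k X, hmem k X⟩ ⟨π k Y, hmem k Y⟩).im) ∧
      (∀ X Y : g, B X Y = B Y X) ∧
      (∀ k l, k ≠ l → ∀ x ∈ I k, ∀ y ∈ I l, B x y = 0)) ∧
    (∀ K : g →ₗ[ℂ] g →ₗ[ℂ] ℂ, (∀ Z X Y : g, K ⁅Z, X⁆ Y + K X ⁅Z, Y⁆ = 0) →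
      (∃ lam : Fin n → ℂ, ∀ X Y : g,
        K X Y =
          ∑ k, lam k * killingForm ℂ (I k) ⟨π k X, hmem k X⟩ ⟨π k Y, hmem k Y⟩) ∧
      (∀ X Y : g, K X Y = K Y X) ∧
      (∀ k l, k ≠ l → ∀ x ∈ I k, ∀ y ∈ I l, K x y = 0)) := by
  classical
  have hbr : ∀ k l, k ≠ l → ∀ x ∈ I k, ∀ y ∈ I l, ⁅x, y⁆ = 0 := by
    intro k l hkl x hx y hy
    have h1 : ⁅x, y⁆ ∈ I k := lie_mem_left ℂ g (I k) x y hx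
    have h2 : ⁅x, y⁆ ∈ I l := lie_mem_right ℂ g (I l) x y hy
    rw [← hproj k _ h1]
    exact hzero k l hkl _ h2
  have hperfI : ∀ (k) (S : Submodule ℂ g), (∀ a ∈ I k, ∀ b ∈ I k, ⁅a, b⁆ ∈ S) →
      ∀ x ∈ I k, x ∈ S := by
    intro k S hS x hx
    exact simple_mem_of_brackets (hsimple k) (S.comap (I k).toSubmodule.subtype)
      (fun a b => hS a a.2 b b.2) ⟨x, hx⟩
  have hperf : ∀ (S : Submodule ℂ g), (∀ a b : g, ⁅a, b⁆ ∈ S) → ∀ x, x ∈ S := by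
    intro S hS x
    rw [← hsum x]
    exact Submodule.sum_mem _ fun k _ => hperfI k S (fun a _ b _ => hS a b) _ (hmem k x)
  have main : ∀ K : g →ₗ[ℂ] g →ₗ[ℂ] ℂ, (∀ Z X Y : g, K ⁅Z, X⁆ Y + K X ⁅Z, Y⁆ = 0) →
      (∃ lam : Fin n → ℂ, ∀ X Y : g,
        K X Y =
          ∑ k, lam k * killingForm ℂ (I k) ⟨π k X, hmem k X⟩ ⟨π k Y, hmem k Y⟩) ∧
      (∀ X Y : g, K X Y = K Y X) ∧
      (∀ k l, k ≠ l → ∀ x ∈ I k, ∀ y ∈ I l, K x y = 0) := by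
    intro K hK
    have horth : ∀ k l, k ≠ l → ∀ x ∈ I k, ∀ y ∈ I l, K x y = 0 := by
      intro k l hkl x hx y hy
      have := hperfI k (LinearMap.ker (K.flip y)) (fun a ha b hb => by
        have h := hK a b y
        rw [hbr k l hkl a ha y hy, map_zero, add_zero] at h
        simpa using h) x hx
      simpa using this
    have hloc : ∀ k, ∃ c : ℂ, ∀ X Y : I k, K X Y = c * killingForm ℂ (I k) X Y := by
      intro k
      obtain ⟨c, hc⟩ := simple_invariant_form (hsimple k)
        (K.compl₁₂ (I k).toSubmodule.subtype (I k).toSubmodule.subtype)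
        (fun Z X Y => hK Z X Y)
      exact ⟨c, fun X Y => hc X Y⟩
    choose lam hlam using hloc
    have hform : ∀ X Y : g, K X Y =
          ∑ k, lam k * killingForm ℂ (I k) ⟨π k X, hmem k X⟩ ⟨π k Y, hmem k Y⟩ := by
      intro X Y
      conv_lhs => rw [← hsum X, ← hsum Y]
      rw [map_sum K, LinearMap.sum_apply]
      refine Finset.sum_congr rfl fun k _ => ?_
      rw [map_sum, Finset.sum_eq_single k]
      · exact hlam k ⟨π k X, hmem k X⟩ ⟨π k Y, hmem k Y⟩
      · intro l _ hl
        exact horth k l hl.symm _ (hmem k X) _ (hmem l Y)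
      · simp
    refine ⟨⟨lam, hform⟩, fun X Y => ?_, horth⟩
    rw [hform, hform]
    refine Finset.sum_congr rfl fun k _ => ?_
    congr 1
    exact LieModule.traceForm_comm ℂ (I k) (I k) _ _
  refine ⟨?_, main⟩
  intro B hB
  have hII : ∀ x : g, Complex.I • Complex.I • x = -x := by
    intro x; rw [smul_smul, Complex.I_mul_I, neg_one_smul]
  have hcs : ∀ (c : ℂ) (x : g), c • x = c.re • x + c.im • (Complex.I • x) := by
    intro c x
    rw [← algebraMap_smul ℂ c.re x, ← algebraMap_smul ℂ c.im (Complex.I • x), smul_smul,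
      ← add_smul]
    congr 1
    exact (Complex.re_add_im c).symm
  have hBr : ∀ (r : ℝ) (X Y : g), B X (r • Y) = r * B X Y := by
    intro r X Y; rw [map_smul, smul_eq_mul]
  have hI0 : ∀ W Z Y : g, B (Complex.I • W) ⁅Z, Y⁆ = B W (Complex.I • ⁅Z, Y⁆) := by
    intro W Z Y
    have h1 := hB Z (Complex.I • W) Y
    have h2 := hB (Complex.I • Z) W Y
    rw [lie_smul] at h1
    rw [smul_lie, smul_lie] at h2
    linarith
  have hI : ∀ V W : g, B (Complex.I • W) V = B W (Complex.I • V) := by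
    let S : Submodule ℂ g :=
      { carrier := {V | ∀ W, B (Complex.I • W) V = B W (Complex.I • V)}
        zero_mem' := by intro W; simp
        add_mem' := by
          intro a b ha hb W
          rw [smul_add, map_add, map_add, ha W, hb W]
        smul_mem' := by
          intro c x hx W
          have hx' : ∀ W, B (Complex.I • W) x = B W (Complex.I • x) := hx
          have e : Complex.I • (c • x) = c.re • (Complex.I • x) + c.im • (-x) := by
            rw [smul_comm, hcs c (Complex.I • x), hII]
          rw [e, hcs c x, map_add, map_add, hBr, hBr, hBr, hBr,
            hx' W, ← hx' (Complex.I • W), hII]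
          simp }
    intro V
    exact hperf S (fun a b W => hI0 W a b) V
  let K : g →ₗ[ℂ] g →ₗ[ℂ] ℂ := LinearMap.mk₂ ℂ
    (fun X Y => (B (Complex.I • X) Y : ℂ) + Complex.I * (B X Y : ℂ))
    (by intro a b y; simp only [smul_add, map_add, LinearMap.add_apply]; push_cast; ring)
    (by
      intro c x y
      have e : Complex.I • (c • x) = c.re • (Complex.I • x) + c.im • (-x) := by
        rw [smul_comm, hcs c (Complex.I • x), hII]
      rw [e, hcs c x]
      apply Complex.ext <;> simp <;> ring)
    (by intro a b y; simp only [map_add]; push_cast; ring)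
    (by
      intro c x y
      rw [hcs c y]
      simp only [map_add, map_smul, ← hI, hII]
      apply Complex.ext <;> simp <;> ring)
  have hKdef : ∀ X Y, K X Y = (B (Complex.I • X) Y : ℂ) + Complex.I * (B X Y : ℂ) :=
    fun X Y => rfl
  have hKim : ∀ X Y, B X Y = (K X Y).im := by
    intro X Y; rw [hKdef]; simp
  have hKinv : ∀ Z X Y : g, K ⁅Z, X⁆ Y + K X ⁅Z, Y⁆ = 0 := by
    intro Z X Y
    have h1 := hB Z (Complex.I • X) Y
    have h2 := hB Z X Y
    rw [lie_smul] at h1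
    rw [hKdef, hKdef]
    apply Complex.ext
    · simpa using h1
    · simpa using h2
  obtain ⟨⟨lam, hl⟩, hsym, ho⟩ := main K hKinv
  refine ⟨⟨lam, fun X Y => ?_⟩, fun X Y => ?_, fun k l hkl x hx y hy => ?_⟩
  · rw [hKim, hl, Complex.im_sum]
  · rw [hKim, hKim, hsym]
  · rw [hKim, ho k l hkl x hx y hy, Complex.zero_im]
end

section
/- Let g be a finite-dimensional complex semisimple Lie algebra with simple ideals g_1, …, g_n, λ ∈ ℂ^n, and let s be a complex simple Lie subalgebra of g. Then the restriction of B_λ^g to s equals B_μ^s, i.e. the form (X,Y) ↦ Im(μ K_s(X,Y)) on s, where μ = Σ_{i=1}^n q_i λ_i and each q_i is a nonnegative rational number; moreover q_i ≠ 0 if and only if [s, g_i] ≠ 0. -/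
open Module

/-- Eigenvalues of `ad h` for an `sl₂`-triple are integers. -/
lemma Delorme.eigenvalue_int {L : Type*} [LieRing L] [LieAlgebra ℂ L] [FiniteDimensional ℂ L]
    {h e f : L} (t : IsSl2Triple h e f) {μ : ℂ}
    (hμ : (LieAlgebra.ad ℂ L h).HasEigenvalue μ) : ∃ z : ℤ, μ = z := by
  obtain ⟨m₀, hm₀⟩ := hμ.exists_hasEigenvector
  have hm₁ : ⁅h, m₀⁆ = μ • m₀ := hm₀.apply_eq_smul
  let evals (n : ℕ) : ℂ := μ + 2 * (n : ℂ)
  let e_vecs (n : ℕ) : L := ((LieModule.toEnd ℂ L L e) ^ n) m₀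
  have h_exists_zero : ∃ k, e_vecs k = 0 := by
    by_contra! contra
    have h_inj : Function.Injective evals := fun a b hab ↦ by
      simpa [evals, add_right_inj, mul_eq_mul_left_iff, Nat.cast_inj] using hab
    have aux (μ : Set.range evals) :
        (LieModule.toEnd ℂ L L h).HasEigenvector μ (e_vecs μ.property.choose) := by
      set n := μ.property.choose
      refine ⟨?_, contra n⟩
      rw [Module.End.mem_eigenspace_iff, LieModule.toEnd_apply_apply, ← μ.property.choose_spec]
      exact t.lie_h_pow_toEnd_e hm₁ n
    have _i := ((LieModule.toEnd ℂ L L h).eigenvectors_linearIndependent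
      (Set.range evals) _ aux).finite
    exact (Set.infinite_range_of_injective h_inj) (Set.toFinite _)
  obtain ⟨n, hn_ne, hn_zero⟩ := Nat.exists_not_and_succ_of_not_zero_of_exists hm₀.2 h_exists_zero
  have P : IsSl2Triple.HasPrimitiveVectorWith t (e_vecs n) (evals n) :=
    { ne_zero := hn_ne
      lie_h := t.lie_h_pow_toEnd_e hm₁ n
      lie_e := by rwa [IsSl2Triple.lie_e_pow_toEnd_e n] }
  obtain ⟨N, hN⟩ := P.exists_nat
  refine ⟨(N : ℤ) - 2 * n, ?_⟩
  push_cast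
  rw [← hN]
  simp [evals]

/-- The Killing form at `h` of an `sl₂`-triple is a positive natural number. -/
lemma Delorme.killing_pos {L : Type*} [LieRing L] [LieAlgebra ℂ L] [FiniteDimensional ℂ L]
    {h e f : L} (t : IsSl2Triple h e f) : ∃ N : ℕ, 0 < N ∧ killingForm ℂ L h h = N := by
  set F : Module.End ℂ L := LieAlgebra.ad ℂ L h with hF
  have hnt : Nontrivial L := ⟨h, 0, t.h_ne_zero⟩
  have htr : killingForm ℂ L h h = (F ^ 2).charpoly.roots.sum := by
    rw [killingForm_apply_apply,
      ← Module.End.trace_eq_sum_roots_charpoly_of_splits (IsAlgClosed.splits _), pow_two]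
    rfl
  have hsq : ∀ ν ∈ (F ^ 2).charpoly.roots, ∃ N : ℕ, (N : ℂ) = ν := by
    intro ν hν
    have h1 := (Module.End.mem_spectrum_iff_isRoot_charpoly _ _).2 (Polynomial.isRoot_of_mem_roots hν)
    rw [spectrum.map_pow_of_pos F two_pos] at h1
    obtain ⟨μ, hμ, rfl⟩ := h1
    obtain ⟨z, rfl⟩ := Delorme.eigenvalue_int t (Module.End.hasEigenvalue_iff_mem_spectrum.2 hμ)
    refine ⟨z.natAbs ^ 2, ?_⟩
    have : ((z.natAbs : ℤ)) ^ 2 = z ^ 2 := Int.natAbs_sq z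
    have h2 := congrArg (Int.cast : ℤ → ℂ) this
    rw [Int.cast_pow, Int.cast_pow, Int.cast_natCast] at h2
    rw [Nat.cast_pow]
    exact h2
  have h4 : (4 : ℂ) ∈ (F ^ 2).charpoly.roots := by
    rw [Polynomial.mem_roots (LinearMap.charpoly_monic _).ne_zero,
      ← Module.End.hasEigenvalue_iff_isRoot_charpoly]
    refine Module.End.hasEigenvalue_of_hasEigenvector (x := e)
      ⟨Module.End.mem_eigenspace_iff.2 ?_, t.e_ne_zero⟩
    have := t.lie_h_e_smul ℂ
    simp only [hF, pow_two, Module.End.mul_apply, LieAlgebra.ad_apply, this, lie_smul, smul_smul]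
    norm_num
  obtain ⟨R, hR⟩ : ∃ R : Multiset ℕ, R.map (Nat.cast : ℕ → ℂ) = (F ^ 2).charpoly.roots := by
    revert hsq
    generalize (F ^ 2).charpoly.roots = T
    intro hsq
    induction T using Multiset.induction_on with
    | empty => exact ⟨0, rfl⟩
    | cons a T ih =>
      obtain ⟨R, hR⟩ := ih (fun ν hν => hsq ν (Multiset.mem_cons_of_mem hν))
      obtain ⟨N, hN⟩ := hsq a (Multiset.mem_cons_self a T)
      exact ⟨N ::ₘ R, by simp [hR, hN]⟩
  refine ⟨R.sum, ?_, ?_⟩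
  · rw [← hR, Multiset.mem_map] at h4
    obtain ⟨a, ha, ha4⟩ := h4
    have : a = 4 := by exact_mod_cast ha4
    have := Multiset.le_sum_of_mem ha
    omega
  · rw [htr, ← hR, Nat.cast_multiset_sum]

lemma Delorme.exists_sl2 (S : Type*) [LieRing S] [LieAlgebra ℂ S] [FiniteDimensional ℂ S]
    [LieAlgebra.IsSimple ℂ S] : ∃ h e f : S, IsSl2Triple h e f := by
  obtain ⟨x, hx⟩ := LieAlgebra.exists_isCartanSubalgebra_engel ℂ S
  set H := LieSubalgebra.engel ℂ x
  have hirr : (LieAlgebra.IsKilling.rootSystem H).IsIrreducible := inferInstance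
  have hnt : Nontrivial (Module.Dual ℂ H) := hirr.nontrivial
  have hsp := LieAlgebra.IsKilling.span_weight_isNonZero_eq_top ℂ S H
  obtain ⟨α, hα⟩ : ∃ α : LieModule.Weight ℂ H S, α.IsNonZero := by
    by_contra! hcon
    have : {α : LieModule.Weight ℂ H S | α.IsNonZero} = ∅ := by
      ext α; simpa using hcon α
    rw [this] at hsp
    simp at hsp
  obtain ⟨h, e, f, t, -⟩ := LieAlgebra.IsKilling.exists_isSl2Triple_of_weight_isNonZero hα
  exact ⟨h, e, f, t⟩

/-- An invariant bilinear form on a simple Lie algebra is a multiple of the Killing form. -/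
lemma Delorme.schur {S : Type*} [LieRing S] [LieAlgebra ℂ S] [FiniteDimensional ℂ S]
    [LieAlgebra.IsSimple ℂ S] (B : LinearMap.BilinForm ℂ S)
    (hB : ∀ x y z : S, B ⁅x, y⁆ z = - B y ⁅x, z⁆) :
    ∃ c : ℂ, ∀ x y, B x y = c * killingForm ℂ S x y := by
  have hnd : (killingForm ℂ S).Nondegenerate := LieAlgebra.IsKilling.killingForm_nondegenerate ℂ S
  obtain ⟨h, e, f, t⟩ := Delorme.exists_sl2 S
  have hnt : Nontrivial S := ⟨h, 0, t.h_ne_zero⟩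
  let D := LinearMap.BilinForm.toDual (killingForm ℂ S) hnd
  let T : Module.End ℂ S := D.symm.toLinearMap ∘ₗ B
  have hT : ∀ x y, killingForm ℂ S (T x) y = B x y := by
    intro x y
    have : D (T x) = B x := by simp [T]
    rw [← this]; rfl
  obtain ⟨c, hc⟩ := Module.End.exists_eigenvalue T
  let J : LieIdeal ℂ S :=
    { carrier := {x | ∀ y, B x y = c * killingForm ℂ S x y}
      add_mem' := by
        intro a b ha hb y
        simp only [Set.mem_ofPred_eq] at ha hb
        simp [ha y, hb y, mul_add]
      zero_mem' := by intro y; simp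
      smul_mem' := by
        intro r a ha y
        simp only [Set.mem_ofPred_eq] at ha
        simp [ha y, mul_left_comm]
      lie_mem := by
        intro x m hm y
        have hm' : ∀ y, B m y = c * killingForm ℂ S m y := hm
        rw [hB, hm', LieModule.traceForm_apply_lie_apply']
        ring }
  have hJ : J ≠ ⊥ := by
    obtain ⟨v, hv⟩ := hc.exists_hasEigenvector
    intro hbot
    have hvJ : v ∈ J := by
      intro y
      rw [← hT, hv.apply_eq_smul]; simp
    rw [hbot] at hvJ
    exact hv.2 (by simpa using hvJ)
  have hJt := (LieAlgebra.IsSimple.eq_bot_or_eq_top J).resolve_left hJ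
  refine ⟨c, fun x => ?_⟩
  have : x ∈ J := by rw [hJt]; trivial
  exact this

lemma Delorme.pullback {S L : Type*} [LieRing S] [LieAlgebra ℂ S] [FiniteDimensional ℂ S]
    [LieRing L] [LieAlgebra ℂ L] [FiniteDimensional ℂ L]
    (hS : LieAlgebra.IsSimple ℂ S) (φ : S →ₗ⁅ℂ⁆ L) :
    ∃ q : ℚ, 0 ≤ q ∧
      (∀ X Y, killingForm ℂ L (φ X) (φ Y) = (q : ℂ) * killingForm ℂ S X Y) ∧
      (q ≠ 0 ↔ ∃ x, φ x ≠ 0) := by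
  by_cases hφ : ∃ x, φ x ≠ 0
  · obtain ⟨h, e, f, t⟩ := Delorme.exists_sl2 S
    have hker : φ.ker = ⊥ := by
      refine (LieAlgebra.IsSimple.eq_bot_or_eq_top φ.ker).resolve_right fun htop => ?_
      obtain ⟨x, hx⟩ := hφ
      have : x ∈ φ.ker := by rw [htop]; trivial
      exact hx (by simpa using this)
    have t' : IsSl2Triple (φ h) (φ e) (φ f) :=
      { h_ne_zero := fun h0 => t.h_ne_zero (by
          have : h ∈ φ.ker := by simpa using h0
          rw [hker] at this
          simpa using this)
        lie_e_f := by rw [← LieHom.map_lie, t.lie_e_f]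
        lie_h_e_nsmul := by rw [← LieHom.map_lie, t.lie_h_e_nsmul, map_nsmul]
        lie_h_f_nsmul := by rw [← LieHom.map_lie, t.lie_h_f_nsmul, map_neg, map_nsmul] }
    obtain ⟨N, hN, hN'⟩ := Delorme.killing_pos t
    obtain ⟨M, hM, hM'⟩ := Delorme.killing_pos t'
    obtain ⟨c, hc⟩ := Delorme.schur
      ((killingForm ℂ L).compl₁₂ (φ : S →ₗ[ℂ] L) (φ : S →ₗ[ℂ] L)) (by
        intro x y z
        simpa using LieModule.traceForm_apply_lie_apply' ℂ L L (φ x) (φ y) (φ z))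
    have hc' : ∀ X Y, killingForm ℂ L (φ X) (φ Y) = c * killingForm ℂ S X Y := fun X Y => hc X Y
    have hN0 : (N : ℂ) ≠ 0 := by exact_mod_cast hN.ne'
    have hcq : c = (((M : ℚ) / (N : ℚ) : ℚ) : ℂ) := by
      have := hc' h h
      rw [hM', hN'] at this
      push_cast
      rw [eq_div_iff hN0, this]
    refine ⟨(M : ℚ) / N, by positivity, fun X Y => by rw [← hcq]; exact hc' X Y, ?_⟩
    have : (M : ℚ) / N ≠ 0 := by positivity
    exact ⟨fun _ => hφ, fun _ => this⟩
  · push Not at hφ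
    exact ⟨0, le_rfl, fun X Y => by simp [hφ], by simp [hφ]⟩

/-- Lemma 1 (iii) of Delorme.
Let `g` be complex semisimple with simple ideals `I k` (projections `π k`), `λ : Fin n → ℂ`,
and let `s` be a complex simple Lie subalgebra of `g`.  The restriction of
`B_λ^g X Y = ∑ k, Im (λ k * K_{g_k}(X_k, Y_k))` to `s` equals `B_μ^s = Im (μ * K_s (·,·))`
where `μ = ∑ k, q k * λ k` with each `q k` a nonnegative rational, and `q k ≠ 0` iff
`[s, g_k] ≠ 0`. -/
theorem restriction_of_Blam_to_simple_subalgebra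
    (g : Type*) [LieRing g] [LieAlgebra ℝ g] [LieAlgebra ℂ g] [IsScalarTower ℝ ℂ g]
    [FiniteDimensional ℂ g] [LieAlgebra.IsSemisimple ℂ g]
    (n : ℕ) (I : Fin n → LieIdeal ℂ g) [∀ k, Module.Finite ℂ (I k)]
    (hsimple : ∀ k, LieAlgebra.IsSimple ℂ (I k))
    (hinj : Function.Injective I)
    (hall : ∀ J : LieIdeal ℂ g, LieAlgebra.IsSimple ℂ J → ∃ k, I k = J)
    (π : Fin n → (g →ₗ[ℂ] g))
    (hmem : ∀ k x, π k x ∈ I k)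
    (hsum : ∀ x : g, ∑ k, π k x = x)
    (hproj : ∀ k, ∀ x ∈ I k, π k x = x)
    (hzero : ∀ k l, k ≠ l → ∀ x ∈ I l, π k x = 0)
    (lam : Fin n → ℂ)
    (s : LieSubalgebra ℂ g) [Module.Finite ℂ s] (hs : LieAlgebra.IsSimple ℂ s) :
    ∃ q : Fin n → ℚ, (∀ k, 0 ≤ q k) ∧
      (∀ X Y : s,
        (∑ k, (lam k *
            killingForm ℂ (I k) ⟨π k (X : g), hmem k (X : g)⟩
              ⟨π k (Y : g), hmem k (Y : g)⟩).im) =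
          ((∑ k, (q k : ℂ) * lam k) * killingForm ℂ s X Y).im) ∧
      (∀ k, q k ≠ 0 ↔ ∃ x ∈ s, ∃ y ∈ I k, ⁅x, y⁆ ≠ (0 : g)) := by
  have hbr : ∀ k l, k ≠ l → ∀ x ∈ I k, ∀ y ∈ I l, ⁅x, y⁆ = (0 : g) := by
    intro k l hkl x hx y hy
    have h1 : ⁅x, y⁆ ∈ I l := lie_mem_right ℂ g (I l) x y hy
    have h2 : ⁅x, y⁆ ∈ I k := lie_mem_left ℂ g (I k) x y hx
    rw [← hproj k _ h2]
    exact hzero k l hkl _ h1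
  have hbr1 : ∀ k (x y : g), y ∈ I k → ⁅x, y⁆ = ⁅π k x, y⁆ := by
    intro k x y hy
    conv_lhs => rw [← hsum x, sum_lie]
    exact Finset.sum_eq_single k (fun l _ hl => hbr l k hl _ (hmem l x) y hy) (by simp)
  have hπ : ∀ k (x y : g), π k ⁅x, y⁆ = ⁅π k x, π k y⁆ := by
    intro k x y
    have h1 : ⁅x, y⁆ = ∑ l, ⁅π l x, π l y⁆ := by
      conv_lhs => rw [← hsum y, lie_sum]
      exact Finset.sum_congr rfl fun l _ => hbr1 l x _ (hmem l y)
    rw [h1, map_sum, Finset.sum_eq_single k]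
    · exact hproj k _ (lie_mem_right ℂ g (I k) _ _ (hmem k y))
    · intro l _ hl
      exact hzero k l (Ne.symm hl) _ (lie_mem_right ℂ g (I l) _ _ (hmem l y))
    · simp
  let φ : ∀ k, s →ₗ⁅ℂ⁆ (I k) := fun k =>
    { toFun := fun x => ⟨π k (x : g), hmem k (x : g)⟩
      map_add' := fun x y => Subtype.ext (by simp)
      map_smul' := fun r x => Subtype.ext (by simp)
      map_lie' := fun {x y} => Subtype.ext (by simp [hπ]) }
  choose q hq0 hq1 hq2 using fun k => Delorme.pullback hs (φ k)
  refine ⟨q, hq0, ?_, ?_⟩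
  · intro X Y
    rw [← Complex.im_sum, Finset.sum_mul]
    congr 1
    refine Finset.sum_congr rfl fun k _ => ?_
    have := hq1 k X Y
    change lam k * killingForm ℂ (I k) (φ k X) (φ k Y) = _
    rw [this]; ring
  · intro k
    rw [hq2 k]
    constructor
    · rintro ⟨x, hx⟩
      by_contra! hcon
      apply hx
      have hI := hsimple k
      have hz : φ k x ∈ LieAlgebra.center ℂ (I k) := by
        rw [LieModule.mem_maxTrivSubmodule]
        intro y
        rw [← lie_skew, neg_eq_zero]
        apply Subtype.ext
        change ⁅π k (x : g), (y : g)⁆ = 0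
        rw [← hbr1 k _ _ y.2]
        exact hcon x x.2 y y.2
      rw [LieAlgebra.center_eq_bot] at hz
      simpa using hz
    · rintro ⟨x, hx, y, hy, hxy⟩
      refine ⟨⟨x, hx⟩, fun h0 => hxy ?_⟩
      have h0' : π k x = 0 := congrArg Subtype.val h0
      rw [hbr1 k x y hy, h0', zero_lie]
end

section
/- Let g be a finite-dimensional complex semisimple Lie algebra with simple ideals g_1, …, g_n, and let λ = (λ_1,…,λ_n) ∈ ℂ^n satisfy: whenever Σ_{i=1}^n q_i λ_i = 0 with all q_i nonnegative rational numbers, then all q_i are zero. Then the form B_λ (resp. K_λ) is special, i.e. its restriction to every complex semisimple Lie subalgebra of g is nondegenerate. In particular this holds whenever the λ_i are linearly independent over ℚ, or all λ_i are strictly positive real numbers. -/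
section Aux

open Module LieModule LieAlgebra LieAlgebra.IsKilling

theorem exists_root_aux (L : Type*) [LieRing L] [LieAlgebra ℂ L] [FiniteDimensional ℂ L]
    [LieAlgebra.IsKilling ℂ L] [Nontrivial L] (H : LieSubalgebra ℂ L) [H.IsCartanSubalgebra] :
    ∃ α : Weight ℂ H L, α.IsNonZero := by
  by_contra! hcon
  have h1 := span_weight_isNonZero_eq_top ℂ L H
  have h2 : {α : Weight ℂ H L | α.IsNonZero} = ∅ := by
    ext α; simpa using hcon α
  rw [h2, Set.image_empty, Submodule.span_empty] at h1
  have h3 : Subsingleton (Dual ℂ H) := (Submodule.subsingleton_iff ℂ).mp (subsingleton_of_bot_eq_top h1)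
  have h4 : Subsingleton H := by
    refine ⟨fun a b => ?_⟩
    rw [← sub_eq_zero, ← Module.forall_dual_apply_eq_zero_iff ℂ]
    intro f
    rw [Subsingleton.elim f 0]; rfl
  have h5 : H = ⊥ := by
    rw [LieSubalgebra.eq_bot_iff]
    intro x hx
    have := Subsingleton.elim (⟨x, hx⟩ : H) 0
    simpa using congrArg Subtype.val this
  have h6 := LieSubalgebra.IsCartanSubalgebra.self_normalizing (H := H)
  have h7 : ∀ x : L, x = 0 := by
    intro x
    have : x ∈ H.normalizer := by
      rw [LieSubalgebra.mem_normalizer_iff]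
      intro y hy
      rw [h5, LieSubalgebra.mem_bot] at hy
      simp [hy]
    rw [h6, h5] at this
    simpa using this
  obtain ⟨x, hx⟩ := exists_ne (0 : L)
  exact hx (h7 x)

theorem exists_h_aux (L : Type*) [LieRing L] [LieAlgebra ℂ L] [FiniteDimensional ℂ L]
    [LieAlgebra.IsKilling ℂ L] [Nontrivial L] {ι : Type*} (M : ι → Type*)
    [∀ i, AddCommGroup (M i)] [∀ i, Module ℂ (M i)] [∀ i, LieRingModule L (M i)]
    [∀ i, LieModule ℂ L (M i)] [∀ i, FiniteDimensional ℂ (M i)] :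
    ∃ h e : L, e ≠ 0 ∧ ⁅h, e⁆ = (2 : ℂ) • e ∧ ∀ i, ∃ q : ℚ, 0 ≤ q ∧
      traceForm ℂ L (M i) h h = (q : ℂ) ∧
      (q = 0 → ∀ m : M i, ⁅h, m⁆ = (2 : ℂ) • m → m = 0) := by
  obtain ⟨x, hx⟩ := LieAlgebra.exists_isCartanSubalgebra_engel ℂ L
  set H := LieSubalgebra.engel ℂ x
  obtain ⟨α, hα⟩ := exists_root_aux L H
  obtain ⟨e, he₀, he⟩ := exists_forall_lie_eq_smul ℂ H L α
  refine ⟨(coroot α : H), e, he₀, ?_, fun i => ?_⟩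
  · have := he (coroot α)
    rw [root_apply_coroot hα] at this
    exact this
  have hrat : ∀ χ : Weight ℂ H (M i), ∃ r : ℚ, χ (coroot α) = (r : ℂ) := by
    intro χ
    obtain ⟨a, b, hb, hab⟩ := exists_forall_mem_corootSpace_smul_add_eq_zero (M i) (α : H → ℂ) χ
      hα χ.genWeightSpace_ne_bot
    have h := hab _ (coroot_mem_corootSpace α)
    rw [Pi.add_apply, Pi.smul_apply, Pi.smul_apply, root_apply_coroot hα, zsmul_eq_mul,
      zsmul_eq_mul] at h
    refine ⟨-(a * 2) / b, ?_⟩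
    have hb' : (b : ℂ) ≠ 0 := by exact_mod_cast hb.ne'
    push_cast
    rw [eq_div_iff hb']
    linear_combination h
  choose r hr using hrat
  refine ⟨∑ χ : Weight ℂ H (M i), finrank ℂ (genWeightSpace (M i) χ) * (r χ * r χ), ?_, ?_, ?_⟩
  · exact Finset.sum_nonneg fun χ _ => mul_nonneg (Nat.cast_nonneg _) (mul_self_nonneg _)
  · have : traceForm ℂ L (M i) (coroot α : H) (coroot α : H)
        = traceForm ℂ H (M i) (coroot α) (coroot α) := rfl
    rw [this, traceForm_eq_sum_finrank_nsmul_mul]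
    push_cast
    exact Finset.sum_congr rfl fun χ _ => by rw [hr, nsmul_eq_mul]
  · intro hq m hm
    rw [Finset.sum_eq_zero_iff_of_nonneg
      (fun χ _ => mul_nonneg (Nat.cast_nonneg _) (mul_self_nonneg _))] at hq
    have hz : ∀ χ : Weight ℂ H (M i), χ (coroot α) = 0 := by
      intro χ
      have h := hq χ (Finset.mem_univ _)
      have hne : Nontrivial (genWeightSpace (M i) χ) :=
        (LieSubmodule.nontrivial_iff_ne_bot _ _ _).mpr χ.genWeightSpace_ne_bot
      have hf : 0 < finrank ℂ (genWeightSpace (M i) χ) := finrank_pos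
      have : r χ = 0 := by
        rcases mul_eq_zero.mp h with h | h
        · exact absurd (Nat.cast_eq_zero.mp h) hf.ne'
        · exact mul_self_eq_zero.mp h
      rw [hr, this, Rat.cast_zero]
    have htop : (⊤ : LieSubmodule ℂ H (M i)) ≤ genWeightSpaceOf (M i) (0 : ℂ) (coroot α) := by
      rw [← iSup_genWeightSpace_eq_top' ℂ H (M i)]
      refine iSup_le fun χ => ?_
      have := genWeightSpace_le_genWeightSpaceOf (M i) (coroot α) χ
      rwa [hz] at this
    have h0 : m ∈ (toEnd ℂ H (M i) (coroot α)).maxGenEigenspace 0 := htop (LieSubmodule.mem_top m)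
    have h2 : m ∈ (toEnd ℂ H (M i) (coroot α)).maxGenEigenspace 2 := by
      rw [Module.End.mem_maxGenEigenspace]
      refine ⟨1, ?_⟩
      have hm' : toEnd ℂ H (M i) (coroot α) m = (2 : ℂ) • m := hm
      simp only [pow_one, LinearMap.sub_apply, hm', LinearMap.smul_apply, Module.End.one_apply, sub_self]
    have hd := Module.End.disjoint_genEigenspace (toEnd ℂ H (M i) (coroot α))
      (two_ne_zero (α := ℂ)).symm ⊤ ⊤
    exact (Submodule.disjoint_def.mp hd) m h0 h2

theorem special_aux (g : Type*) [LieRing g] [LieAlgebra ℂ g] [FiniteDimensional ℂ g]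
    (n : ℕ) (I : Fin n → LieIdeal ℂ g)
    (π : Fin n → (g →ₗ[ℂ] g))
    (hmem : ∀ k x, π k x ∈ I k)
    (hsum : ∀ x : g, ∑ k, π k x = x)
    (hlie : ∀ k (x y : g), π k ⁅x, y⁆ = ⁅x, π k y⁆)
    (lam : Fin n → ℂ)
    (hlam : ∀ q : Fin n → ℚ, (∀ k, 0 ≤ q k) → (∑ k, (q k : ℂ) * lam k) = 0 → ∀ k, q k = 0)
    (s : LieSubalgebra ℂ g) (hs : LieAlgebra.IsSemisimple ℂ s)
    (x : g) (hx : x ∈ s)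
    (hxy : ∀ y ∈ s, ∑ k, lam k * traceForm ℂ g (I k) x y = 0) : x = 0 := by
  let r : LieIdeal ℂ s :=
    { carrier := {x | ∀ y : s, ∑ k, lam k * traceForm ℂ g (I k) x y = 0}
      add_mem' := by
        intro a b ha hb y
        have h1 := ha y
        have h2 := hb y
        simp only [AddMemClass.coe_add, map_add, LinearMap.add_apply, mul_add,
          Finset.sum_add_distrib, h1, h2, add_zero]
      zero_mem' := by
        intro y
        simp
      smul_mem' := by
        intro c a ha y
        have h1 := ha y
        simp only [SetLike.val_smul, map_smul, LinearMap.smul_apply, smul_eq_mul]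
        simp only [mul_left_comm _ c, ← Finset.mul_sum, h1, mul_zero]
      lie_mem := by
        intro z a ha y
        have h1 := ha ⁅z, y⁆
        rw [← neg_eq_zero, ← Finset.sum_neg_distrib, ← h1]
        refine Finset.sum_congr rfl fun k _ => ?_
        rw [LieSubalgebra.coe_bracket, LieSubalgebra.coe_bracket, ← lie_skew, map_neg,
          LinearMap.neg_apply, traceForm_apply_lie_apply]
        ring }
  have hxr : (⟨x, hx⟩ : s) ∈ r := fun y => hxy y y.2
  have hr : r = ⊥ := by
    rcases IsAtomic.eq_bot_or_exists_atom_le r with h | ⟨J, hJ, hJr⟩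
    · exact h
    exfalso
    have hsimp := LieAlgebra.IsSemisimple.isSimple_of_isAtom J hJ
    have : Nontrivial J := LieAlgebra.IsSimple.nontrivial ℂ J
    obtain ⟨h, e, he₀, he, hq⟩ := exists_h_aux J (fun k => I k)
    choose q hq0 hq1 hq2 using hq
    have hz := hlam q hq0 (by
      rw [← hJr h.2 h]
      refine Finset.sum_congr rfl fun k _ => ?_
      rw [← hq1 k, mul_comm]
      rfl)
    have he' : ⁅((h : s) : g), ((e : s) : g)⁆ = (2 : ℂ) • ((e : s) : g) :=
      congrArg (fun z : J => ((z : s) : g)) he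
    apply he₀
    have : ((e : s) : g) = 0 := by
      rw [← hsum ((e : s) : g)]
      refine Finset.sum_eq_zero fun k _ => ?_
      have := hq2 k (hz k) ⟨π k ((e : s) : g), hmem k _⟩ (by
        apply Subtype.ext
        change ⁅((h : s) : g), π k ((e : s) : g)⁆ = (2 : ℂ) • π k ((e : s) : g)
        rw [← hlie, he', map_smul])
      exact congrArg Subtype.val this
    exact Subtype.ext (Subtype.ext this)
  rw [hr, LieSubmodule.mem_bot] at hxr
  exact congrArg Subtype.val hxr

end Aux

open Module

/-- Lemma 2 (iv) of Delorme.
Let `g` be complex semisimple with simple ideals `I k` (projections `π k`) and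
`λ : Fin n → ℂ` such that any vanishing `ℚ≥0`-linear combination of the `λ k` is trivial.
Then `B_λ` (resp. `K_λ`) is special: its restriction to every complex semisimple Lie
subalgebra of `g` is nondegenerate.  The hypothesis holds when the `λ k` are linearly
independent over `ℚ`, or when all `λ k` are strictly positive reals. -/
theorem Blam_is_special
    (g : Type*) [LieRing g] [LieAlgebra ℝ g] [LieAlgebra ℂ g] [IsScalarTower ℝ ℂ g]
    [FiniteDimensional ℂ g] [LieAlgebra.IsSemisimple ℂ g]
    (n : ℕ) (I : Fin n → LieIdeal ℂ g) [∀ k, Module.Finite ℂ (I k)]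
    (hsimple : ∀ k, LieAlgebra.IsSimple ℂ (I k))
    (hinj : Function.Injective I)
    (hall : ∀ J : LieIdeal ℂ g, LieAlgebra.IsSimple ℂ J → ∃ k, I k = J)
    (π : Fin n → (g →ₗ[ℂ] g))
    (hmem : ∀ k x, π k x ∈ I k)
    (hsum : ∀ x : g, ∑ k, π k x = x)
    (hproj : ∀ k, ∀ x ∈ I k, π k x = x)
    (hzero : ∀ k l, k ≠ l → ∀ x ∈ I l, π k x = 0)
    (lam : Fin n → ℂ)
    (Blam : g → g → ℝ)
    (hB : ∀ X Y : g,
      Blam X Y = ∑ k, (lam k * killingForm ℂ (I k) ⟨π k X, hmem k X⟩ ⟨π k Y, hmem k Y⟩).im)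
    (Klam : g → g → ℂ)
    (hK : ∀ X Y : g,
      Klam X Y = ∑ k, lam k * killingForm ℂ (I k) ⟨π k X, hmem k X⟩ ⟨π k Y, hmem k Y⟩) :
    ((∀ q : Fin n → ℚ, (∀ k, 0 ≤ q k) → (∑ k, (q k : ℂ) * lam k) = 0 → ∀ k, q k = 0) →
      ∀ s : LieSubalgebra ℂ g, LieAlgebra.IsSemisimple ℂ s →
        (∀ x ∈ s, (∀ y ∈ s, Blam x y = 0) → x = 0) ∧
        (∀ x ∈ s, (∀ y ∈ s, Klam x y = 0) → x = 0)) ∧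
    (LinearIndependent ℚ lam →
      ∀ q : Fin n → ℚ, (∀ k, 0 ≤ q k) → (∑ k, (q k : ℂ) * lam k) = 0 → ∀ k, q k = 0) ∧
    ((∀ k, ∃ r : ℝ, 0 < r ∧ lam k = (r : ℂ)) →
      ∀ q : Fin n → ℚ, (∀ k, 0 ≤ q k) → (∑ k, (q k : ℂ) * lam k) = 0 → ∀ k, q k = 0) := by
  classical
  have hdisj : ∀ k l, k ≠ l → ∀ x ∈ I k, x ∈ I l → x = 0 := by
    intro k l hkl x hk hl
    rw [← hproj k x hk, hzero k l hkl x hl]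
  have hbr : ∀ k l, k ≠ l → ∀ x ∈ I k, ∀ y ∈ I l, ⁅x, y⁆ = 0 := by
    intro k l hkl x hx y hy
    refine hdisj k l hkl _ ?_ (LieSubmodule.lie_mem _ hy)
    rw [← lie_skew]
    exact neg_mem (LieSubmodule.lie_mem _ hx)
  have hlie : ∀ k (x y : g), π k ⁅x, y⁆ = ⁅x, π k y⁆ := by
    intro k x y
    conv_lhs => rw [← hsum y, lie_sum, map_sum]
    rw [Finset.sum_eq_single k]
    · exact hproj k _ (LieSubmodule.lie_mem _ (hmem k y))
    · intro l _ hl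
      exact hzero k l hl.symm _ (LieSubmodule.lie_mem _ (hmem l y))
    · simp
  have hact : ∀ k x (m : g), m ∈ I k → ⁅π k x, m⁆ = ⁅x, m⁆ := by
    intro k x m hm
    conv_rhs => rw [← hsum x, sum_lie]
    rw [Finset.sum_eq_single k]
    · intro l _ hl
      exact hbr l k hl _ (hmem l x) _ hm
    · simp
  have hkill : ∀ k X Y, killingForm ℂ (I k) ⟨π k X, hmem k X⟩ ⟨π k Y, hmem k Y⟩
      = LieModule.traceForm ℂ g (I k) X Y := by
    intro k X Y
    have h1 : ∀ X, LieModule.toEnd ℂ (I k) (I k) ⟨π k X, hmem k X⟩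
        = LieModule.toEnd ℂ g (I k) X := by
      intro X
      ext m
      exact hact k X m m.2
    rw [LieModule.traceForm_apply_apply, LieModule.traceForm_apply_apply, h1, h1]
  refine ⟨fun hlam s hs => ?_, fun hli q _ hq => ?_, fun hpos q hq0 hq => ?_⟩
  · have key : ∀ x ∈ s, (∀ y ∈ s, Klam x y = 0) → x = 0 := by
      intro x hx h
      refine special_aux g n I π hmem hsum hlie lam hlam s hs x hx fun y hy => ?_
      rw [← h y hy, hK]
      exact Finset.sum_congr rfl fun k _ => by rw [hkill]
    refine ⟨fun x hx h => key x hx fun y hy => ?_, key⟩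
    have hBK : ∀ X Y, Blam X Y = (Klam X Y).im := by
      intro X Y
      rw [hB, hK, Complex.im_sum]
    have hI : Klam x (Complex.I • y) = Complex.I * Klam x y := by
      rw [hK, hK, Finset.mul_sum]
      refine Finset.sum_congr rfl fun k _ => ?_
      rw [hkill, hkill, map_smul, smul_eq_mul]
      ring
    have h1 := h y hy
    have h2 := h _ (s.smul_mem Complex.I hy)
    rw [hBK] at h1 h2
    rw [hI] at h2
    apply Complex.ext
    · simpa using h2
    · simpa using h1
  · rw [Fintype.linearIndependent_iff] at hli
    apply hli q
    rw [← hq]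
    exact Finset.sum_congr rfl fun k _ => by rw [Rat.smul_def]
  · choose r hr hlr using hpos
    have h1 : ∑ k, (q k : ℝ) * r k = 0 := by
      have : ((∑ k, (q k : ℝ) * r k : ℝ) : ℂ) = 0 := by
        push_cast
        rw [← hq]
        exact Finset.sum_congr rfl fun k _ => by rw [hlr]
      exact_mod_cast this
    rw [Finset.sum_eq_zero_iff_of_nonneg
      (fun k _ => mul_nonneg (by exact_mod_cast hq0 k) (hr k).le)] at h1
    intro k
    rcases mul_eq_zero.mp (h1 k (Finset.mem_univ _)) with h | h
    · exact_mod_cast h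
    · exact absurd h (hr k).ne'
end

section
/- Let g be a finite-dimensional complex reductive Lie algebra, X a semisimple element of g such that ad X has only real eigenvalues, l the centralizer of X in g, a the center of l and l^der the derived ideal of l. (i) The restriction to l of any nondegenerate, symmetric, g-invariant, ℝ-bilinear (resp. ℂ-bilinear) form B on g is nondegenerate, and so are its restrictions to l^der and to a. (ii) If B is a real (resp. complex) Manin form on g, then its restrictions to l, to l^der and to a are Manin forms. (iii) A symmetric g-invariant bilinear form on g is a Manin form if and only if its restrictions to the derived ideal g^der and to the center of g are Manin forms. -/
open Module

namespace ManinPaper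

variable (g : Type*) [LieRing g] [LieAlgebra ℝ g] [LieAlgebra ℂ g] [IsScalarTower ℝ ℂ g]
  [FiniteDimensional ℂ g] [FiniteDimensional ℝ g]

/-! ### Bilinear forms, signature, Manin forms -/

/-- Invariance of an `ℝ`-bilinear form. -/
def RInvariant (B : g →ₗ[ℝ] g →ₗ[ℝ] ℝ) : Prop :=
  ∀ Z X Y : g, B ⁅Z, X⁆ Y + B X ⁅Z, Y⁆ = 0

def RSymm (B : g →ₗ[ℝ] g →ₗ[ℝ] ℝ) : Prop := ∀ X Y : g, B X Y = B Y X

def CInvariant (B : g →ₗ[ℂ] g →ₗ[ℂ] ℂ) : Prop :=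
  ∀ Z X Y : g, B ⁅Z, X⁆ Y + B X ⁅Z, Y⁆ = 0

def CSymm (B : g →ₗ[ℂ] g →ₗ[ℂ] ℂ) : Prop := ∀ X Y : g, B X Y = B Y X

/-- Nondegeneracy of the restriction of a complex bilinear form to the subspace `W`. -/
def CNondegOn (B : g →ₗ[ℂ] g →ₗ[ℂ] ℂ) (W : Set g) : Prop :=
  ∀ x ∈ W, (∀ y ∈ W, B x y = 0) → x = 0

def RNondegOn (B : g →ₗ[ℝ] g →ₗ[ℝ] ℝ) (W : Set g) : Prop :=
  ∀ x ∈ W, (∀ y ∈ W, B x y = 0) → x = 0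

/-- The real symmetric bilinear form `B`, restricted to the real subspace `W`, has
signature `(p, q)`. -/
def SignatureOn (B : g →ₗ[ℝ] g →ₗ[ℝ] ℝ) (W : Submodule ℝ g) (p q : ℕ) : Prop :=
  ∃ P N : Submodule ℝ g, P ≤ W ∧ N ≤ W ∧ P ⊓ N = ⊥ ∧ P ⊔ N = W ∧
    finrank ℝ P = p ∧ finrank ℝ N = q ∧
    (∀ x ∈ P, x ≠ 0 → 0 < B x x) ∧ (∀ x ∈ N, x ≠ 0 → B x x < 0) ∧
    (∀ x ∈ P, ∀ y ∈ N, B x y = 0)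

/-- A real Manin form on `g`: symmetric, invariant, of signature
`(dim_ℂ g, dim_ℂ g)`. -/
def RealManinForm (B : g →ₗ[ℝ] g →ₗ[ℝ] ℝ) : Prop :=
  RSymm g B ∧ RInvariant g B ∧ SignatureOn g B ⊤ (finrank ℂ g) (finrank ℂ g)

/-- A complex Manin form on `g`: symmetric, invariant, nondegenerate. -/
def ComplexManinForm (B : g →ₗ[ℂ] g →ₗ[ℂ] ℂ) : Prop :=
  CSymm g B ∧ CInvariant g B ∧ CNondegOn g B Set.univ

def RIsotropic (B : g →ₗ[ℝ] g →ₗ[ℝ] ℝ) (s : Set g) : Prop :=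
  ∀ x ∈ s, ∀ y ∈ s, B x y = 0

def CIsotropic (B : g →ₗ[ℂ] g →ₗ[ℂ] ℂ) (s : Set g) : Prop :=
  ∀ x ∈ s, ∀ y ∈ s, B x y = 0

/-! ### Subalgebras of `g`, given as subspaces -/

def IsSub (V : Submodule ℂ g) : Prop := ∀ x ∈ V, ∀ y ∈ V, ⁅x, y⁆ ∈ V

def IsSubR (V : Submodule ℝ g) : Prop := ∀ x ∈ V, ∀ y ∈ V, ⁅x, y⁆ ∈ V

/-- The span of all brackets. -/
def bracketSpan (V W : Submodule ℂ g) : Submodule ℂ g :=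
  Submodule.span ℂ {z : g | ∃ x ∈ V, ∃ y ∈ W, ⁅x, y⁆ = z}

def bracketSpanR (V W : Submodule ℝ g) : Submodule ℝ g :=
  Submodule.span ℝ {z : g | ∃ x ∈ V, ∃ y ∈ W, ⁅x, y⁆ = z}

/-- Derived series of a subalgebra (given as a subspace). -/
def derivedSub (V : Submodule ℂ g) : ℕ → Submodule ℂ g
  | 0 => V
  | k + 1 => bracketSpan g (derivedSub V k) (derivedSub V k)

def derivedSubR (V : Submodule ℝ g) : ℕ → Submodule ℝ g
  | 0 => V
  | k + 1 => bracketSpanR g (derivedSubR V k) (derivedSubR V k)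

/-- Lower central series. -/
def lcsSub (V : Submodule ℂ g) : ℕ → Submodule ℂ g
  | 0 => V
  | k + 1 => bracketSpan g V (lcsSub V k)

def lcsSubR (V : Submodule ℝ g) : ℕ → Submodule ℝ g
  | 0 => V
  | k + 1 => bracketSpanR g V (lcsSubR V k)

def SolvableSub (V : Submodule ℂ g) : Prop := ∃ k, derivedSub g V k = ⊥

def SolvableSubR (V : Submodule ℝ g) : Prop := ∃ k, derivedSubR g V k = ⊥

def NilpotentSub (V : Submodule ℂ g) : Prop := ∃ k, lcsSub g V k = ⊥

def NilpotentSubR (V : Submodule ℝ g) : Prop := ∃ k, lcsSubR g V k = ⊥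

/-- `J` is an ideal of the subalgebra `V`. -/
def IsIdealIn (V J : Submodule ℂ g) : Prop :=
  J ≤ V ∧ ∀ x ∈ V, ∀ y ∈ J, ⁅x, y⁆ ∈ J

def IsIdealInR (V J : Submodule ℝ g) : Prop :=
  J ≤ V ∧ ∀ x ∈ V, ∀ y ∈ J, ⁅x, y⁆ ∈ J

/-- The radical (largest solvable ideal) of the subalgebra `V`. -/
def radicalIn (V : Submodule ℂ g) : Submodule ℂ g :=
  sSup {J : Submodule ℂ g | IsIdealIn g V J ∧ SolvableSub g J}

def radicalInR (V : Submodule ℝ g) : Submodule ℝ g :=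
  sSup {J : Submodule ℝ g | IsIdealInR g V J ∧ SolvableSubR g J}

/-- The nilpotent radical `[V,V] ⊓ rad V` of the subalgebra `V`; by Bourbaki, Ch. I §5.3,
this is the largest ideal of `V` whose elements act nilpotently in every finite-dimensional
representation of `V`. -/
def nilpotentRadIn (V : Submodule ℂ g) : Submodule ℂ g :=
  bracketSpan g V V ⊓ radicalIn g V

def nilpotentRadInR (V : Submodule ℝ g) : Submodule ℝ g :=
  bracketSpanR g V V ⊓ radicalInR g V

/-- The centre of the subalgebra `V`. -/
def centerIn (V : Submodule ℂ g) : Submodule ℂ g where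
  carrier := {z : g | z ∈ V ∧ ∀ y ∈ V, ⁅z, y⁆ = 0}
  zero_mem' := ⟨V.zero_mem, fun y _ => zero_lie y⟩
  add_mem' := by
    rintro a b ⟨ha, ha'⟩ ⟨hb, hb'⟩
    exact ⟨V.add_mem ha hb, fun y hy => by rw [add_lie, ha' y hy, hb' y hy, add_zero]⟩
  smul_mem' := by
    rintro c x ⟨hx, hx'⟩
    exact ⟨V.smul_mem c hx, fun y hy => by rw [smul_lie, hx' y hy, smul_zero]⟩

/-- The centralizer of a set. -/
def centralizerOf (s : Set g) : Submodule ℂ g where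
  carrier := {z : g | ∀ y ∈ s, ⁅z, y⁆ = 0}
  zero_mem' := fun y _ => zero_lie y
  add_mem' := by
    rintro a b ha hb
    exact fun y hy => by rw [add_lie, ha y hy, hb y hy, add_zero]
  smul_mem' := by
    rintro c x hx
    exact fun y hy => by rw [smul_lie, hx y hy, smul_zero]

/-- The derived (sub)algebra of `V`, as a subspace of `g`. -/
def derivedOf (V : Submodule ℂ g) : Submodule ℂ g := bracketSpan g V V

/-- A semisimple complex subalgebra: a subalgebra with trivial radical. -/
def SemisimpleSub (V : Submodule ℂ g) : Prop := IsSub g V ∧ radicalIn g V = ⊥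

/-- Borel subalgebras of the subalgebra `W`: maximal solvable subalgebras of `W`. -/
def IsBorelIn (W b : Submodule ℂ g) : Prop :=
  IsSub g b ∧ b ≤ W ∧ SolvableSub g b ∧
    ∀ b' : Submodule ℂ g, IsSub g b' → b' ≤ W → SolvableSub g b' → b ≤ b' → b' = b

/-- Parabolic subalgebras of `W`: subalgebras of `W` containing a Borel subalgebra of `W`. -/
def IsParabolicIn (W p : Submodule ℂ g) : Prop :=
  IsSub g p ∧ p ≤ W ∧ ∃ b : Submodule ℂ g, IsBorelIn g W b ∧ b ≤ p

/-- `l` is reductive in `W`: every `l`-invariant subspace of `W` admits an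
`l`-invariant complement in `W`. -/
def ReductiveIn (W l : Submodule ℂ g) : Prop :=
  ∀ U : Submodule ℂ g, U ≤ W → (∀ x ∈ l, ∀ u ∈ U, ⁅x, u⁆ ∈ U) →
    ∃ U' : Submodule ℂ g, U' ≤ W ∧ (∀ x ∈ l, ∀ u ∈ U', ⁅x, u⁆ ∈ U') ∧
      U ⊓ U' = ⊥ ∧ U ⊔ U' = W

/-- A Langlands decomposition `p = l ⊕ n` of the parabolic subalgebra `p` of `W`, where
`n` is the nilpotent radical of `p` and `l` is a subalgebra reductive in `W`. -/
def IsLanglandsIn (W p l : Submodule ℂ g) : Prop :=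
  IsSub g l ∧ l ≤ p ∧ ReductiveIn g W l ∧
    l ⊓ nilpotentRadIn g p = ⊥ ∧ l ⊔ nilpotentRadIn g p = p

/-- Cartan subalgebras of `W`: nilpotent and self-normalizing in `W`. -/
def IsCartanIn (W j : Submodule ℂ g) : Prop :=
  IsSub g j ∧ j ≤ W ∧ NilpotentSub g j ∧
    ∀ x ∈ W, (∀ y ∈ j, ⁅x, y⁆ ∈ j) → x ∈ j

def IsCartanInR (W j : Submodule ℝ g) : Prop :=
  IsSubR g j ∧ j ≤ W ∧ NilpotentSubR g j ∧
    ∀ x ∈ W, (∀ y ∈ j, ⁅x, y⁆ ∈ j) → x ∈ j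

/-- `g` is reductive: its radical coincides with its centre. -/
def IsReductive : Prop := radicalIn g ⊤ = centerIn g ⊤

/-- `b'` is the Borel subalgebra of `W` opposite to `b` relative to the Cartan
subalgebra `j`. -/
def IsOppositeBorelIn (W j b b' : Submodule ℂ g) : Prop :=
  IsBorelIn g W b' ∧ j ≤ b' ∧ b ⊓ b' = j

/-- The restriction of `B` to the reductive subalgebra `W` is a real Manin form. -/
def RealManinFormOn (B : g →ₗ[ℝ] g →ₗ[ℝ] ℝ) (W : Submodule ℂ g) : Prop :=
  (∀ x ∈ W, ∀ y ∈ W, B x y = B y x) ∧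
  (∀ z ∈ W, ∀ x ∈ W, ∀ y ∈ W, B ⁅z, x⁆ y + B x ⁅z, y⁆ = 0) ∧
  SignatureOn g B (W.restrictScalars ℝ) (finrank ℂ W) (finrank ℂ W)

/-- The restriction of `B` to the reductive subalgebra `W` is a complex Manin form. -/
def ComplexManinFormOn (B : g →ₗ[ℂ] g →ₗ[ℂ] ℂ) (W : Submodule ℂ g) : Prop :=
  (∀ x ∈ W, ∀ y ∈ W, B x y = B y x) ∧
  (∀ z ∈ W, ∀ x ∈ W, ∀ y ∈ W, B ⁅z, x⁆ y + B x ⁅z, y⁆ = 0) ∧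
  CNondegOn g B W



section RealForms

set_option linter.unusedSectionVars false

variable {E : Type*} [AddCommGroup E] [Module ℝ E] [FiniteDimensional ℝ E]

/-- Signature of the restriction of a form to a subspace, on a plain real vector space. -/
def Sig (B : E →ₗ[ℝ] E →ₗ[ℝ] ℝ) (W : Submodule ℝ E) (p q : ℕ) : Prop :=
  ∃ P N : Submodule ℝ E, P ≤ W ∧ N ≤ W ∧ P ⊓ N = ⊥ ∧ P ⊔ N = W ∧
    finrank ℝ P = p ∧ finrank ℝ N = q ∧
    (∀ x ∈ P, x ≠ 0 → 0 < B x x) ∧ (∀ x ∈ N, x ≠ 0 → B x x < 0) ∧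
    (∀ x ∈ P, ∀ y ∈ N, B x y = 0)

/-- Nondegeneracy of the restriction of a form to a subspace. -/
def NDOn (B : E →ₗ[ℝ] E →ₗ[ℝ] ℝ) (W : Submodule ℝ E) : Prop :=
  ∀ x ∈ W, (∀ y ∈ W, B x y = 0) → x = 0

/-- Positive definiteness on a subspace. -/
def PosOn (B : E →ₗ[ℝ] E →ₗ[ℝ] ℝ) (W : Submodule ℝ E) : Prop :=
  ∀ x ∈ W, x ≠ 0 → 0 < B x x

lemma pos_neg_inf (B : E →ₗ[ℝ] E →ₗ[ℝ] ℝ) {P N : Submodule ℝ E}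
    (hP : PosOn B P) (hN : PosOn (-B) N) : P ⊓ N = ⊥ := by
  rw [eq_bot_iff]
  rintro x ⟨hx, hx'⟩
  by_contra h
  have h0 : x ≠ 0 := by simpa using h
  have h1 := hP x hx h0
  have h2 := hN x hx' h0
  simp only [LinearMap.neg_apply] at h2
  linarith

lemma pos_neg_finrank (B : E →ₗ[ℝ] E →ₗ[ℝ] ℝ) {P N W : Submodule ℝ E} (hPW : P ≤ W) (hNW : N ≤ W)
    (hP : PosOn B P) (hN : PosOn (-B) N) : finrank ℝ P + finrank ℝ N ≤ finrank ℝ W := by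
  have h := Submodule.finrank_sup_add_finrank_inf_eq P N
  rw [pos_neg_inf B hP hN, finrank_bot] at h
  have := Submodule.finrank_mono (sup_le hPW hNW)
  omega

lemma sylv_top {V : Type*} [AddCommGroup V] [Module ℝ V] [FiniteDimensional ℝ V]
    (B : V →ₗ[ℝ] V →ₗ[ℝ] ℝ) (hs : ∀ x y, B x y = B y x) (hnd : ∀ x, (∀ y, B x y = 0) → x = 0) :
    ∃ P N : Submodule ℝ V, P ⊔ N = ⊤ ∧ PosOn B P ∧ PosOn (-B) N ∧ ∀ x ∈ P, ∀ y ∈ N, B x y = 0 := by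
  obtain ⟨v, hv⟩ := LinearMap.BilinForm.exists_orthogonal_basis (B := B) ⟨hs⟩
  have hv' : ∀ i j, i ≠ j → B (v i) (v j) = 0 := fun i j hij => hv hij
  have hexp : ∀ x y, B x y = ∑ i, v.repr x i * v.repr y i * B (v i) (v i) := by
    intro x y
    conv_lhs => rw [← v.sum_repr x, ← v.sum_repr y]
    simp only [map_sum, LinearMap.sum_apply, map_smul, LinearMap.smul_apply, smul_eq_mul]
    refine Finset.sum_congr rfl fun i _ => ?_
    rw [Finset.sum_eq_single i]
    · ring
    · intro j _ hji
      rw [hv' _ _ hji]; ring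
    · simp
  have hne : ∀ i, B (v i) (v i) ≠ 0 := by
    intro i hi
    apply v.ne_zero i
    apply hnd
    intro y
    rw [hexp]
    refine Finset.sum_eq_zero fun j _ => ?_
    by_cases hij : j = i
    · subst hij; rw [hi]; ring
    · rw [v.repr_self, Finsupp.single_apply, if_neg (Ne.symm hij)]; ring
  let p : Set (Fin (finrank ℝ V)) := {i | 0 < B (v i) (v i)}
  have hz : ∀ (s : Set (Fin (finrank ℝ V))) x, x ∈ Submodule.span ℝ (v '' s) →
      ∀ i, i ∉ s → v.repr x i = 0 := by
    intro s x hx i hi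
    rw [v.mem_span_image] at hx
    by_contra h
    exact hi (hx (by simpa using h))
  have hnz : ∀ x, x ≠ 0 → ∃ i, v.repr x i ≠ 0 := by
    intro x hx
    by_contra! h
    apply hx
    apply v.repr.injective
    ext i
    simpa using h i
  refine ⟨Submodule.span ℝ (v '' p), Submodule.span ℝ (v '' pᶜ), ?_, ?_, ?_, ?_⟩
  · rw [← Submodule.span_union, ← Set.image_union, Set.union_compl_self, Set.image_univ, v.span_eq]
  · intro x hx h0
    rw [hexp]
    obtain ⟨i, hi⟩ := hnz x h0
    apply Finset.sum_pos'
    · intro j _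
      by_cases hj : j ∈ p
      · exact mul_nonneg (mul_self_nonneg _) (le_of_lt hj)
      · rw [hz _ _ hx j hj]; simp
    · refine ⟨i, Finset.mem_univ _, ?_⟩
      have : i ∈ p := by by_contra h; exact hi (hz _ _ hx i h)
      exact mul_pos (mul_self_pos.2 hi) this
  · intro x hx h0
    simp only [LinearMap.neg_apply]
    rw [hexp, ← Finset.sum_neg_distrib]
    obtain ⟨i, hi⟩ := hnz x h0
    apply Finset.sum_pos'
    · intro j _
      by_cases hj : j ∈ p
      · rw [hz _ _ hx j (by simpa using hj)]; simp
      · have : B (v j) (v j) ≤ 0 := not_lt.1 hj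
        have h2 := mul_self_nonneg (v.repr x j)
        nlinarith
    · refine ⟨i, Finset.mem_univ _, ?_⟩
      have h1 : i ∉ p := by intro h; exact hi (hz _ _ hx i (by simpa using h))
      have h2 : B (v i) (v i) < 0 := lt_of_le_of_ne (not_lt.1 h1) (hne i)
      have h3 := mul_self_pos.2 hi
      nlinarith
  · intro x hx y hy
    rw [hexp]
    refine Finset.sum_eq_zero fun i _ => ?_
    by_cases hi : i ∈ p
    · rw [hz _ _ hy i (by simpa using hi)]; ring
    · rw [hz _ _ hx i hi]; ring

lemma sylv (B : E →ₗ[ℝ] E →ₗ[ℝ] ℝ) (hs : ∀ x y, B x y = B y x) (W : Submodule ℝ E)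
    (hnd : NDOn B W) :
    ∃ P N : Submodule ℝ E, P ≤ W ∧ N ≤ W ∧ P ⊔ N = W ∧ PosOn B P ∧ PosOn (-B) N ∧
      ∀ x ∈ P, ∀ y ∈ N, B x y = 0 := by
  obtain ⟨P, N, h1, h2, h3, h4⟩ := sylv_top (V := W) (B.domRestrict₁₂ W W)
    (fun x y => hs x y) (fun x hx => Subtype.ext (hnd x x.2 fun y hy => hx ⟨y, hy⟩))
  refine ⟨P.map W.subtype, N.map W.subtype, Submodule.map_subtype_le _ _,
    Submodule.map_subtype_le _ _, ?_, ?_, ?_, ?_⟩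
  · rw [← Submodule.map_sup, h1, Submodule.map_top, Submodule.range_subtype]
  · rintro _ ⟨x, hx, rfl⟩ h0
    exact h2 x hx (fun h => h0 (by rw [h]; simp))
  · rintro _ ⟨x, hx, rfl⟩ h0
    exact h3 x hx (fun h => h0 (by rw [h]; simp))
  · rintro _ ⟨x, hx, rfl⟩ _ ⟨y, hy, rfl⟩
    exact h4 x hx y hy

lemma sig_of (B : E →ₗ[ℝ] E →ₗ[ℝ] ℝ) (hs : ∀ x y, B x y = B y x) (W : Submodule ℝ E)
    (hnd : NDOn B W) (n : ℕ) (hn : finrank ℝ W = 2 * n)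
    (hP : ∀ P ≤ W, PosOn B P → finrank ℝ P ≤ n)
    (hN : ∀ P ≤ W, PosOn (-B) P → finrank ℝ P ≤ n) : Sig B W n n := by
  obtain ⟨P, N, h1, h2, h3, h4, h5, h6⟩ := sylv B hs W hnd
  have h := Submodule.finrank_sup_add_finrank_inf_eq P N
  have h7 := pos_neg_inf B h4 h5
  rw [h7, finrank_bot, h3, hn] at h
  have h8 := hP P h1 h4
  have h9 := hN N h2 h5
  refine ⟨P, N, h1, h2, h7, h3, by omega, by omega, h4, ?_, h6⟩
  intro x hx h0
  simpa using h5 x hx h0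

lemma Sig.neg {B : E →ₗ[ℝ] E →ₗ[ℝ] ℝ} (hs : ∀ x y, B x y = B y x) {W : Submodule ℝ E} {p q : ℕ}
    (h : Sig B W p q) : Sig (-B) W q p := by
  obtain ⟨P, N, h1, h2, h3, h4, h5, h6, h7, h8, h9⟩ := h
  refine ⟨N, P, h2, h1, by rwa [inf_comm], by rwa [sup_comm], h6, h5, ?_, ?_, ?_⟩
  · intro x hx h0; simpa using h8 x hx h0
  · intro x hx h0; simpa using h7 x hx h0
  · intro x hx y hy; simpa using by rw [hs]; exact h9 y hy x hx

lemma Sig.finrank_eq {B : E →ₗ[ℝ] E →ₗ[ℝ] ℝ} {W : Submodule ℝ E} {p q : ℕ}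
    (h : Sig B W p q) : finrank ℝ W = p + q := by
  obtain ⟨P, N, h1, h2, h3, h4, h5, h6, h7, h8, h9⟩ := h
  have h := Submodule.finrank_sup_add_finrank_inf_eq P N
  rw [h3, finrank_bot, h4] at h
  omega

lemma Sig.nd {B : E →ₗ[ℝ] E →ₗ[ℝ] ℝ} (hs : ∀ x y, B x y = B y x) {W : Submodule ℝ E} {p q : ℕ}
    (h : Sig B W p q) : NDOn B W := by
  obtain ⟨P, N, h1, h2, h3, h4, h5, h6, h7, h8, h9⟩ := h
  intro x hx hxy
  rw [← h4] at hx
  obtain ⟨a, ha, b, hb, rfl⟩ := Submodule.mem_sup.1 hx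
  have e1 := hxy a (h1 ha)
  have e2 := hxy b (h2 hb)
  have e3 := h9 a ha b hb
  have e4 := hs a b
  simp only [map_add, LinearMap.add_apply] at e1 e2
  have ha0 : a = 0 := by
    by_contra h; have := h7 a ha h; linarith
  have hb0 : b = 0 := by
    by_contra h; have := h8 b hb h; linarith
  simp [ha0, hb0]

/-- Sum of two orthogonal definite subspaces. -/
lemma PosOn.sup {B : E →ₗ[ℝ] E →ₗ[ℝ] ℝ} (hs : ∀ x y, B x y = B y x) {P Q : Submodule ℝ E}
    (hP : PosOn B P) (hQ : PosOn B Q) (ho : ∀ x ∈ P, ∀ y ∈ Q, B x y = 0) :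
    PosOn B (P ⊔ Q) := by
  intro x hx h0
  obtain ⟨a, ha, b, hb, rfl⟩ := Submodule.mem_sup.1 hx
  have e3 := ho a ha b hb
  have e4 := hs a b
  simp only [map_add, LinearMap.add_apply]
  by_cases ha0 : a = 0
  · subst ha0
    have hb0 : b ≠ 0 := by simpa using h0
    have := hQ b hb hb0
    simpa using this
  · have h1 := hP a ha ha0
    have h2 : 0 ≤ B b b := by
      by_cases hb0 : b = 0
      · simp [hb0]
      · exact (hQ b hb hb0).le
    linarith

lemma PosOn.inf {B : E →ₗ[ℝ] E →ₗ[ℝ] ℝ} {P Q : Submodule ℝ E}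
    (hP : PosOn B P) (ho : ∀ x ∈ P, ∀ y ∈ Q, B x y = 0) : P ⊓ Q = ⊥ := by
  rw [eq_bot_iff]
  rintro x ⟨hx, hx'⟩
  by_contra h
  have := hP x hx (by simpa using h)
  rw [ho x hx x hx'] at this
  exact lt_irrefl _ this

lemma PosOn.finrank_sup {B : E →ₗ[ℝ] E →ₗ[ℝ] ℝ} {P Q : Submodule ℝ E}
    (hP : PosOn B P) (ho : ∀ x ∈ P, ∀ y ∈ Q, B x y = 0) :
    finrank ℝ ↥(P ⊔ Q) = finrank ℝ P + finrank ℝ Q := by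
  have h := Submodule.finrank_sup_add_finrank_inf_eq P Q
  rw [hP.inf ho, finrank_bot] at h
  exact h

lemma Sig.exists_pos {B : E →ₗ[ℝ] E →ₗ[ℝ] ℝ} {W : Submodule ℝ E} {p q : ℕ}
    (h : Sig B W p q) : ∃ P ≤ W, PosOn B P ∧ finrank ℝ P = p := by
  obtain ⟨P, N, h1, h2, h3, h4, h5, h6, h7, h8, h9⟩ := h
  exact ⟨P, h1, h7, h5⟩

/-- Bound for the dimension of positive subspaces in an orthogonal complement. -/
lemma pos_bound_sub {B : E →ₗ[ℝ] E →ₗ[ℝ] ℝ} (hs : ∀ x y, B x y = B y x) {U V W : Submodule ℝ E}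
    {u v : ℕ} (hUW : U ≤ W) (hVW : V ≤ W) (ho : ∀ x ∈ U, ∀ y ∈ V, B x y = 0)
    (hU : Sig B U u u) (hW : Sig B W (u + v) (u + v)) (P : Submodule ℝ E) (hPV : P ≤ V)
    (hP : PosOn B P) : finrank ℝ P ≤ v := by
  obtain ⟨Q, hQ1, hQ2, hQ3⟩ := hU.exists_pos
  obtain ⟨N, hN1, hN2, hN3⟩ := (hW.neg hs).exists_pos
  have ho' : ∀ x ∈ Q, ∀ y ∈ P, B x y = 0 := fun x hx y hy => ho x (hQ1 hx) y (hPV hy)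
  have h1 := hQ2.finrank_sup ho'
  have h2 := pos_neg_finrank B (sup_le (hQ1.trans hUW) (hPV.trans hVW)) hN1 (hQ2.sup hs hP ho') hN2
  have h3 := hW.finrank_eq
  omega

lemma sig_sub {B : E →ₗ[ℝ] E →ₗ[ℝ] ℝ} (hs : ∀ x y, B x y = B y x) {U V W : Submodule ℝ E}
    {u v : ℕ} (hUV : U ⊔ V = W) (ho : ∀ x ∈ U, ∀ y ∈ V, B x y = 0)
    (hU : Sig B U u u) (hW : Sig B W (u + v) (u + v)) (hv : finrank ℝ V = 2 * v) : Sig B V v v := by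
  have hUW : U ≤ W := hUV ▸ le_sup_left
  have hVW : V ≤ W := hUV ▸ le_sup_right
  refine sig_of B hs V ?_ v hv ?_ ?_
  · intro x hx hxy
    refine hW.nd hs x (hVW hx) ?_
    intro y hy
    rw [← hUV] at hy
    obtain ⟨a, ha, b, hb, rfl⟩ := Submodule.mem_sup.1 hy
    rw [map_add, hxy b hb, hs, ho a ha x hx, add_zero]
  · exact pos_bound_sub hs hUW hVW ho hU hW
  · exact pos_bound_sub (B := -B) (fun x y => by simp [hs x y]) hUW hVW
      (fun x hx y hy => by simp [ho x hx y hy]) (hU.neg hs) (hW.neg hs)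

lemma pos_bound_sup {B : E →ₗ[ℝ] E →ₗ[ℝ] ℝ} (hs : ∀ x y, B x y = B y x) {U V W : Submodule ℝ E}
    {u v : ℕ} (hUW : U ≤ W) (hVW : V ≤ W) (ho : ∀ x ∈ U, ∀ y ∈ V, B x y = 0)
    (hU : Sig B U u u) (hV : Sig B V v v) (hW : finrank ℝ W = 2 * (u + v)) (P : Submodule ℝ E)
    (hPW : P ≤ W) (hP : PosOn B P) : finrank ℝ P ≤ u + v := by
  obtain ⟨Q, hQ1, hQ2, hQ3⟩ := (hU.neg hs).exists_pos
  obtain ⟨N, hN1, hN2, hN3⟩ := (hV.neg hs).exists_pos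
  have ho' : ∀ x ∈ Q, ∀ y ∈ N, (-B) x y = 0 := fun x hx y hy => by
    simp [ho x (hQ1 hx) y (hN1 hy)]
  have h1 := hQ2.finrank_sup ho'
  have h2 := pos_neg_finrank B hPW (sup_le (hQ1.trans hUW) (hN1.trans hVW)) hP
    (hQ2.sup (fun x y => by simp [hs x y]) hN2 ho')
  omega

lemma sig_sup {B : E →ₗ[ℝ] E →ₗ[ℝ] ℝ} (hs : ∀ x y, B x y = B y x) {U V W : Submodule ℝ E}
    {u v : ℕ} (hUV : U ⊔ V = W) (ho : ∀ x ∈ U, ∀ y ∈ V, B x y = 0)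
    (hU : Sig B U u u) (hV : Sig B V v v) : Sig B W (u + v) (u + v) := by
  have hUW : U ≤ W := hUV ▸ le_sup_left
  have hVW : V ≤ W := hUV ▸ le_sup_right
  have hinf : U ⊓ V = ⊥ := by
    rw [eq_bot_iff]
    rintro x ⟨hx, hx'⟩
    exact hV.nd hs x hx' fun y hy => ho x hx y hy
  have h := Submodule.finrank_sup_add_finrank_inf_eq U V
  rw [hinf, finrank_bot, hUV, hU.finrank_eq, hV.finrank_eq] at h
  have hW : finrank ℝ W = 2 * (u + v) := by omega
  refine sig_of B hs W ?_ _ hW ?_ ?_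
  · intro x hx hxy
    rw [← hUV] at hx
    obtain ⟨a, ha, b, hb, rfl⟩ := Submodule.mem_sup.1 hx
    have ha0 : a = 0 := hU.nd hs a ha fun y hy => by
      have := hxy y (hUW hy)
      rwa [map_add, LinearMap.add_apply, hs b, ho y hy b hb, add_zero] at this
    have hb0 : b = 0 := hV.nd hs b hb fun y hy => by
      have := hxy y (hVW hy)
      rwa [map_add, LinearMap.add_apply, ho a ha y hy, zero_add] at this
    simp [ha0, hb0]
  · exact pos_bound_sup hs hUW hVW ho hU hV hW
  · exact pos_bound_sup (B := -B) (fun x y => by simp [hs x y]) hUW hVW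
      (fun x hx y hy => by simp [ho x hx y hy]) (hU.neg hs) (hV.neg hs) hW

/-- A nondegenerate form with an anti-isometry has neutral signature. -/
lemma sig_of_anti {B : E →ₗ[ℝ] E →ₗ[ℝ] ℝ} (hs : ∀ x y, B x y = B y x) {W : Submodule ℝ E}
    (hnd : NDOn B W) {n : ℕ} (hn : finrank ℝ W = 2 * n) (J : E →ₗ[ℝ] E)
    (hJ : Function.Injective J) (hJW : ∀ x ∈ W, J x ∈ W)
    (hB : ∀ x ∈ W, B (J x) (J x) = - B x x) : Sig B W n n := by
  have key : ∀ C : E →ₗ[ℝ] E →ₗ[ℝ] ℝ, (∀ x ∈ W, C (J x) (J x) = - C x x) →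
      ∀ P ≤ W, PosOn C P → finrank ℝ P ≤ n := by
    intro C hC P hPW hP
    have h1 : P.map J ≤ W := by
      rintro _ ⟨x, hx, rfl⟩
      exact hJW x (hPW hx)
    have h2 : PosOn (-C) (P.map J) := by
      rintro _ ⟨x, hx, rfl⟩ h0
      have := hP x hx (fun h => h0 (by rw [h]; simp))
      simpa [hC x (hPW hx)] using this
    have h3 := pos_neg_finrank C hPW h1 hP h2
    rw [← (Submodule.equivMapOfInjective J hJ P).finrank_eq] at h3
    omega
  exact sig_of B hs W hnd n hn (key B hB) (key (-B) fun x hx => by simp [hB x hx])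

end RealForms

section LieStructure

set_option linter.unusedSectionVars false

lemma derivedSub_eq (I : LieIdeal ℂ g) (k : ℕ) :
    derivedSub g I.toSubmodule k
      = (LieAlgebra.derivedSeriesOfIdeal ℂ g k I).toSubmodule := by
  induction k with
  | zero => rfl
  | succ k ih =>
    rw [derivedSub, ih, LieAlgebra.derivedSeriesOfIdeal_succ,
      LieSubmodule.lieIdeal_oper_eq_linear_span']
    rfl

variable {g}

lemma solvable_ideal_central (hred : IsReductive g) (I : LieIdeal ℂ g)
    [hI : LieAlgebra.IsSolvable I] (x : g) (hx : x ∈ I) (y : g) : ⁅x, y⁆ = 0 := by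
  have h1 : I.toSubmodule ≤ radicalIn g ⊤ := by
    apply le_sSup
    refine ⟨⟨le_top, fun u _ v hv => I.lie_mem hv⟩, ?_⟩
    obtain ⟨k, hk⟩ := LieAlgebra.IsSolvable.solvable ℂ I
    rw [LieIdeal.derivedSeries_eq_bot_iff] at hk
    refine ⟨k, ?_⟩
    rw [derivedSub_eq, hk]
    rfl
  rw [hred] at h1
  exact (h1 hx).2 y trivial

lemma mem_derivedOf_lie (V : Submodule ℂ g) {x y : g} (hx : x ∈ V) (hy : y ∈ V) :
    ⁅x, y⁆ ∈ derivedOf g V :=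
  Submodule.subset_span ⟨x, hx, y, hy, rfl⟩

/-- Elements orthogonal to the derived algebra for the Killing form are central. -/
lemma killing_perp_central (hred : IsReductive g) (x : g)
    (hx : ∀ u v : g, killingForm ℂ g ⁅u, v⁆ x = 0) (y : g) : ⁅x, y⁆ = 0 := by
  let I : LieIdeal ℂ g := LieIdeal.killingCompl ℂ g ⁅(⊤ : LieIdeal ℂ g), (⊤ : LieIdeal ℂ g)⁆
  have hI : LieAlgebra.IsSolvable I := by
    apply LieIdeal.isSolvable_of_killingForm_apply_lie_eq_zero
    intro a ha b hb
    rw [LieModule.traceForm_comm]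
    exact (LieIdeal.mem_killingCompl ℂ g _).1 ha b (LieSubmodule.mono_lie le_top le_top hb)
  have hxI : x ∈ I := by
    rw [LieIdeal.mem_killingCompl]
    intro b hb
    rw [← LieSubmodule.mem_toSubmodule, LieSubmodule.lieIdeal_oper_eq_linear_span'] at hb
    induction hb using Submodule.span_induction with
    | mem b hb => obtain ⟨u, -, v, -, rfl⟩ := hb; exact hx u v
    | zero => simp
    | add a b _ _ h1 h2 => rw [map_add, LinearMap.add_apply, h1, h2, add_zero]
    | smul c a _ h => rw [map_smul, LinearMap.smul_apply, h, smul_zero]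
  exact solvable_ideal_central hred I x hxI y

lemma center_sup_derived (hred : IsReductive g) : centerIn g ⊤ ⊔ derivedOf g ⊤ = ⊤ := by
  by_contra hne
  obtain ⟨f, hf0, hf⟩ := Submodule.exists_le_ker_of_lt_top _ (lt_top_iff_ne_top.2 hne)
  have hfk : f ∈ (LinearMap.ker (killingForm ℂ g)).dualAnnihilator := by
    rw [Submodule.mem_dualAnnihilator]
    intro x hx
    apply hf
    apply Submodule.mem_sup_left
    refine ⟨trivial, fun y _ => killing_perp_central hred x ?_ y⟩
    intro u v
    rw [LieModule.traceForm_comm]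
    simp [LinearMap.mem_ker.1 hx]
  rw [← LinearMap.range_dualMap_eq_dualAnnihilator_ker] at hfk
  obtain ⟨φ, rfl⟩ := hfk
  obtain ⟨x, rfl⟩ := (Module.evalEquiv ℂ g).surjective φ
  have hval : ∀ y, (killingForm ℂ g).dualMap ((Module.evalEquiv ℂ g) x) y = killingForm ℂ g y x := by
    intro y; rfl
  have hxc : ∀ y : g, ⁅x, y⁆ = 0 := by
    refine killing_perp_central hred x fun u v => ?_
    rw [← hval]
    exact hf (Submodule.mem_sup_right (mem_derivedOf_lie ⊤ trivial trivial))
  apply hf0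
  ext y
  rw [hval]
  have h0 : LieAlgebra.ad ℂ g x = 0 := by ext y; simpa using hxc y
  rw [killingForm_apply_apply, h0, LinearMap.comp_zero, map_zero, LinearMap.zero_apply]

lemma ker_sup_range (f : Module.End ℂ g) (hf : f.IsSemisimple) :
    LinearMap.ker f ⊔ LinearMap.range f = ⊤ := by
  apply Submodule.eq_top_of_disjoint
  · rw [add_comm, LinearMap.finrank_range_add_finrank_ker]
  · rw [Submodule.disjoint_def]
    rintro x hx ⟨y, rfl⟩
    obtain ⟨q, hq, hc⟩ := Module.End.isSemisimple_iff.1 hf (LinearMap.ker f) (by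
      intro z hz
      simp only [Submodule.mem_comap, LinearMap.mem_ker] at hz ⊢
      rw [hz, map_zero])
    have hy : y ∈ LinearMap.ker f ⊔ q := by rw [hc.sup_eq_top]; trivial
    obtain ⟨a, ha, b, hb, rfl⟩ := Submodule.mem_sup.1 hy
    rw [map_add, LinearMap.mem_ker.1 ha, zero_add] at hx ⊢
    exact (Submodule.disjoint_def.1 hc.disjoint) _ hx (hq hb)

/-- Zassenhaus: a central element of `V` in the derived algebra of `V` is orthogonal to `V`. -/
lemma zassenhaus (V : Submodule ℂ g) (hV : IsSub g V) (c : g) (hc : c ∈ centerIn g V)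
    (hc' : c ∈ derivedOf g V) (y : g) (hy : y ∈ V) : killingForm ℂ g c y = 0 := by
  let L : LieSubalgebra ℂ g := { V with lie_mem' := fun {a b} ha hb => hV a ha b hb }
  have hle : derivedOf g V ≤
      (LieModule.lowerCentralSeries ℂ L L 1).toSubmodule.map L.toSubmodule.subtype := by
    apply Submodule.span_le.2
    rintro _ ⟨a, ha, b, hb, rfl⟩
    refine ⟨⁅(⟨a, ha⟩ : L), (⟨b, hb⟩ : L)⁆, ?_, rfl⟩
    rw [LieModule.lowerCentralSeries_succ, LieModule.lowerCentralSeries_zero]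
    exact LieSubmodule.lie_mem_lie trivial trivial
  obtain ⟨c', h1, rfl⟩ := hle hc'
  set f := LieModule.toEnd ℂ L g c' with hf
  have hcomm : ∀ v : L, Commute f (LieModule.toEnd ℂ L g v) := by
    intro v
    apply LinearMap.ext
    intro m
    have h0 : ⁅(c' : g), (v : g)⁆ = 0 := hc.2 v v.2
    change ⁅(c' : g), ⁅(v : g), m⁆⁆ = ⁅(v : g), ⁅(c' : g), m⁆⁆
    rw [leibniz_lie, h0, zero_lie, zero_add]
  have hbot : ∀ μ : ℂ, μ ≠ 0 → f.maxGenEigenspace μ = ⊥ := by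
    intro μ hμ
    let N : LieSubmodule ℂ L g :=
      { f.maxGenEigenspace μ with
        lie_mem := fun {v m} hm => f.mapsTo_maxGenEigenspace_of_comm (hcomm v) μ hm }
    have ht : LinearMap.trace ℂ N (LieModule.toEnd ℂ L N c') = 0 :=
      LieModule.trace_toEnd_eq_zero_of_mem_lcs ℂ L N (le_refl 1) h1
    have ht' : LinearMap.trace ℂ (f.maxGenEigenspace μ)
      (f.restrict (f.mapsTo_maxGenEigenspace_of_comm (Commute.refl f) μ)) = 0 := ht
    have hn := (LinearMap.isNilpotent_trace_of_isNilpotent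
      (f.isNilpotent_restrict_maxGenEigenspace_sub_algebraMap μ)).eq_zero
    have hsub : f.restrict (f.mapsTo_maxGenEigenspace_of_comm (Commute.refl f) μ) -
        algebraMap ℂ (Module.End ℂ (f.maxGenEigenspace μ)) μ =
        f.restrict (f.mapsTo_maxGenEigenspace_of_comm (Commute.refl f) μ) -
        μ • (1 : Module.End ℂ (f.maxGenEigenspace μ)) := by
      rw [Algebra.algebraMap_eq_smul_one]
    have hn' : LinearMap.trace ℂ (f.maxGenEigenspace μ)
      (f.restrict (f.mapsTo_maxGenEigenspace_of_comm (Commute.refl f) μ) -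
        algebraMap ℂ (Module.End ℂ (f.maxGenEigenspace μ)) μ) = 0 := hn
    rw [hsub, map_sub, ht', map_smul, LinearMap.trace_one, zero_sub, neg_eq_zero,
      smul_eq_mul, mul_eq_zero, or_iff_right hμ, Nat.cast_eq_zero] at hn'
    exact Submodule.finrank_eq_zero.1 hn'
  have htop : f.maxGenEigenspace 0 = ⊤ := by
    rw [eq_top_iff, ← Module.End.iSup_maxGenEigenspace_eq_top f]
    apply iSup_le
    intro μ
    by_cases hμ : μ = 0
    · rw [hμ]
    · rw [hbot μ hμ]; exact bot_le
  have hnil : IsNilpotent f := by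
    refine ⟨Module.finrank ℂ g, LinearMap.ext fun m => ?_⟩
    have hm : m ∈ f.maxGenEigenspace 0 := by rw [htop]; trivial
    rw [Module.End.maxGenEigenspace_eq_genEigenspace_finrank,
      Module.End.mem_genEigenspace_nat, zero_smul, sub_zero] at hm
    exact hm
  have hfin := (LinearMap.isNilpotent_trace_of_isNilpotent
    ((hcomm ⟨y, hy⟩).isNilpotent_mul_right hnil)).eq_zero
  exact hfin

lemma derived_induction (V : Submodule ℂ g) (p : g → Prop) (h0 : p 0)
    (hadd : ∀ x y, p x → p y → p (x + y)) (hlie : ∀ x ∈ V, ∀ y ∈ V, p ⁅x, y⁆)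
    (x : g) (hx : x ∈ derivedOf g V) : p x := by
  have : ∀ c : ℂ, p (c • x) := by
    induction hx using Submodule.span_induction with
    | mem b hb =>
      obtain ⟨u, hu, v, hv, rfl⟩ := hb
      intro c
      rw [← smul_lie]
      exact hlie _ (V.smul_mem c hu) _ hv
    | zero => intro c; simpa using h0
    | add a b _ _ h1 h2 => intro c; rw [smul_add]; exact hadd _ _ (h1 c) (h2 c)
    | smul c a _ h => intro d; rw [smul_smul]; exact h _
  simpa using this 1

lemma isSub_centralizer (X : g) : IsSub g (centralizerOf g {X}) := by
  intro x hx y hy z hz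
  rw [lie_lie, hy z hz, hx z hz, lie_zero, lie_zero, sub_zero]

lemma derivedOf_le (V : Submodule ℂ g) (hV : IsSub g V) : derivedOf g V ≤ V := by
  apply Submodule.span_le.2
  rintro _ ⟨a, ha, b, hb, rfl⟩
  exact hV a ha b hb

lemma derivedOf_mono {V W : Submodule ℂ g} (h : V ≤ W) : derivedOf g V ≤ derivedOf g W := by
  apply Submodule.span_mono
  rintro _ ⟨a, ha, b, hb, rfl⟩
  exact ⟨a, h ha, b, h hb, rfl⟩

lemma centralizer_sup_range (X : g) (hX : (LieAlgebra.ad ℂ g X).IsSemisimple) :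
    centralizerOf g {X} ⊔ LinearMap.range (LieAlgebra.ad ℂ g X) = ⊤ := by
  rw [← ker_sup_range _ hX]
  congr 1
  ext y
  rw [LinearMap.mem_ker, LieAlgebra.ad_apply, ← lie_skew, neg_eq_zero]
  exact ⟨fun h => h X rfl, fun h z hz => by rw [Set.mem_singleton_iff.1 hz]; exact h⟩

lemma range_le_derived (X : g) : LinearMap.range (LieAlgebra.ad ℂ g X) ≤ derivedOf g ⊤ := by
  rintro _ ⟨y, rfl⟩
  exact mem_derivedOf_lie ⊤ trivial trivial

end LieStructure

section RealInvariant

set_option linter.unusedSectionVars false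

variable {g} {B : g →ₗ[ℝ] g →ₗ[ℝ] ℝ}

lemma inv_move (hI : RInvariant g B) (x y z : g) : B ⁅x, y⁆ z = B x ⁅y, z⁆ := by
  have := hI y x z
  rw [← lie_skew, map_neg, LinearMap.neg_apply] at this
  rw [← neg_eq_zero, neg_add, neg_neg, ← sub_eq_add_neg, sub_eq_zero] at this
  exact this

lemma orth_center_derived (hI : RInvariant g B) (V : Submodule ℂ g) (x : g)
    (hx : x ∈ centerIn g V) (y : g) (hy : y ∈ derivedOf g V) : B x y = 0 := by
  refine derived_induction V (fun y => B x y = 0) (map_zero _) ?_ ?_ y hy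
  · intro a b ha hb
    rw [map_add, ha, hb, add_zero]
  · intro a ha b hb
    rw [← inv_move hI, hx.2 a ha, map_zero, LinearMap.zero_apply]

lemma orth_centralizer_range (hI : RInvariant g B) (X x : g) (hx : x ∈ centralizerOf g {X})
    (y : g) (hy : y ∈ LinearMap.range (LieAlgebra.ad ℂ g X)) : B x y = 0 := by
  obtain ⟨z, rfl⟩ := hy
  rw [LieAlgebra.ad_apply, ← inv_move hI, hx X rfl, map_zero, LinearMap.zero_apply]

lemma complex_move (hI : RInvariant g B) (u v : g) (hv : v ∈ derivedOf g ⊤) :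
    B (Complex.I • u) v = B u (Complex.I • v) := by
  refine derived_induction ⊤ (fun v => B (Complex.I • u) v = B u (Complex.I • v)) (by simp) ?_ ?_ v hv
  · intro a b ha hb
    rw [map_add, smul_add, map_add, ha, hb]
  · intro y _ z _
    rw [← inv_move hI, smul_lie, ← lie_smul, inv_move hI, smul_lie]

lemma finrank_restrict (W : Submodule ℂ g) :
    finrank ℝ (W.restrictScalars ℝ) = 2 * finrank ℂ W := by
  have h := Module.finrank_mul_finrank ℝ ℂ (W.restrictScalars ℝ)
  rw [Complex.finrank_real_complex] at h
  exact h.symm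

lemma sig_of_le_derived (hS : RSymm g B) (hI : RInvariant g B) (W : Submodule ℂ g)
    (hW : W ≤ derivedOf g ⊤) (hnd : NDOn B (W.restrictScalars ℝ)) :
    Sig B (W.restrictScalars ℝ) (finrank ℂ W) (finrank ℂ W) := by
  refine sig_of_anti hS hnd (finrank_restrict W)
    ((LinearMap.lsmul ℂ g Complex.I).restrictScalars ℝ) ?_ ?_ ?_
  · intro x y hxy
    exact smul_right_injective g Complex.I_ne_zero hxy
  · intro x hx
    exact W.smul_mem _ hx
  · intro x hx
    change B (Complex.I • x) (Complex.I • x) = _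
    rw [complex_move hI _ _ (Submodule.smul_mem _ _ (hW hx)), smul_smul, Complex.I_mul_I,
      neg_one_smul, map_neg]

/-- The nondegeneracy part, together with the decompositions. -/
lemma nd_all (hred : IsReductive g) (X : g) (hX : (LieAlgebra.ad ℂ g X).IsSemisimple)
    (hS : RSymm g B) (hI : RInvariant g B) (hnd : RNondegOn g B Set.univ) :
    RNondegOn g B (centralizerOf g {X}) ∧
    RNondegOn g B (derivedOf g (centralizerOf g {X})) ∧
    RNondegOn g B (centerIn g (centralizerOf g {X})) ∧
    RNondegOn g B (LinearMap.range (LieAlgebra.ad ℂ g X)) ∧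
    derivedOf g (centralizerOf g {X}) ⊔ centerIn g (centralizerOf g {X}) = centralizerOf g {X} := by
  have hsup := centralizer_sup_range X hX
  have horth := orth_centralizer_range hI X
  have hsub := isSub_centralizer X
  have hdl := derivedOf_le _ hsub
  set l := centralizerOf g {X} with hl
  set R := LinearMap.range (LieAlgebra.ad ℂ g X) with hR
  have hdec : ∀ y : g, ∃ a ∈ l, ∃ b ∈ R, a + b = y := fun y =>
    Submodule.mem_sup.1 (by rw [hsup]; trivial)
  have hzD : ∀ x ∈ centerIn g ⊤, x ∈ derivedOf g ⊤ → x = 0 := by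
    intro x hx hx'
    apply hnd x trivial
    intro y _
    obtain ⟨a, ha, b, hb, rfl⟩ := Submodule.mem_sup.1
      (show y ∈ centerIn g ⊤ ⊔ derivedOf g ⊤ by rw [center_sup_derived hred]; trivial)
    rw [map_add, orth_center_derived hI ⊤ x hx b hb, hS, orth_center_derived hI ⊤ a ha x hx',
      add_zero]
  have h1 : RNondegOn g B l := by
    intro x hx hxy
    apply hnd x trivial
    intro y _
    obtain ⟨a, ha, b, hb, rfl⟩ := hdec y
    rw [map_add, hxy a ha, horth x hx b hb, add_zero]
  have h4 : RNondegOn g B R := by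
    intro x hx hxy
    apply hnd x trivial
    intro y _
    obtain ⟨a, ha, b, hb, rfl⟩ := hdec y
    rw [map_add, hxy b hb, hS, horth a ha x hx, add_zero]
  have hperp : ∀ x ∈ l, (∀ y ∈ derivedOf g l, B x y = 0) → x ∈ centerIn g l := by
    intro x hx hxy
    refine ⟨hx, fun u hu => h1 _ (hsub x hx u hu) fun v hv => ?_⟩
    rw [inv_move hI]
    exact hxy _ (mem_derivedOf_lie l hu hv)
  have hinf : ∀ x ∈ centerIn g l, x ∈ derivedOf g l → x = 0 := by
    intro c hc hc'
    refine hzD c ?_ (derivedOf_mono le_top hc')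
    have hk : ∀ y, killingForm ℂ g c y = 0 := by
      intro y
      obtain ⟨a, ha, b, ⟨w, rfl⟩, rfl⟩ := hdec y
      rw [map_add, zassenhaus l hsub c hc hc' a ha, LieAlgebra.ad_apply,
        ← LieModule.traceForm_apply_lie_apply, hc.1 X rfl, map_zero, LinearMap.zero_apply, add_zero]
    refine ⟨trivial, fun y _ => killing_perp_central hred c ?_ y⟩
    intro u v
    rw [LieModule.traceForm_comm]
    exact hk _
  have h2 : RNondegOn g B (derivedOf g l) := by
    intro x hx hxy
    exact hinf x (hperp x (hdl hx) hxy) hx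
  have h5 : derivedOf g l ⊔ centerIn g l = l := by
    apply le_antisymm (sup_le hdl (show centerIn g l ≤ l from fun x hx => And.left hx))
    intro y hy
    have hrefl : LinearMap.BilinForm.IsRefl B := fun a b hab => by rw [hS]; exact hab
    have hc := (LinearMap.BilinForm.isCompl_orthogonal_iff_disjoint
      (W := (derivedOf g l).restrictScalars ℝ) hrefl).2 (by
        rw [Submodule.disjoint_def]
        intro x hx hx'
        exact h2 x hx fun w hw => by rw [hS]; exact hx' w hw)
    obtain ⟨a, ha, b, hb, rfl⟩ := Submodule.mem_sup.1
      (show y ∈ _ ⊔ _ by rw [hc.sup_eq_top]; trivial)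
    have ha' : a ∈ derivedOf g l := ha
    have hbl : b ∈ l := by
      have := l.sub_mem hy (hdl ha')
      simpa using this
    exact Submodule.add_mem_sup ha' (hperp b hbl fun w hw => by rw [hS]; exact hb w hw)
  have h3 : RNondegOn g B (centerIn g l) := by
    intro x hx hxy
    apply h1 x hx.1
    intro y hy
    rw [← h5] at hy
    obtain ⟨a, ha, b, hb, rfl⟩ := Submodule.mem_sup.1 hy
    rw [map_add, hxy b hb, orth_center_derived hI l x hx a ha, add_zero]
  exact ⟨h1, h2, h3, h4, h5⟩

lemma sup_restrict (U V : Submodule ℂ g) :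
    U.restrictScalars ℝ ⊔ V.restrictScalars ℝ = (U ⊔ V).restrictScalars ℝ := by
  ext x
  simp only [Submodule.mem_sup, Submodule.restrictScalars_mem]

lemma finrank_sup_of (U V : Submodule ℂ g) (h : ∀ x ∈ U, x ∈ V → x = 0) :
    finrank ℂ ↥(U ⊔ V) = finrank ℂ U + finrank ℂ V := by
  have h1 := Submodule.finrank_sup_add_finrank_inf_eq U V
  have : U ⊓ V = ⊥ := by
    rw [eq_bot_iff]
    rintro x ⟨hx, hx'⟩
    exact h x hx hx'
  rw [this, finrank_bot] at h1
  exact h1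

lemma sig_all (hred : IsReductive g) (X : g) (hX : (LieAlgebra.ad ℂ g X).IsSemisimple)
    (hB : RealManinForm g B) :
    RealManinFormOn g B (centralizerOf g {X}) ∧
    RealManinFormOn g B (derivedOf g (centralizerOf g {X})) ∧
    RealManinFormOn g B (centerIn g (centralizerOf g {X})) := by
  obtain ⟨hS, hI, hsig⟩ := hB
  have hsig' : Sig B ⊤ (finrank ℂ g) (finrank ℂ g) := hsig
  have hnd : RNondegOn g B Set.univ := fun x _ hxy =>
    hsig'.nd hS x trivial fun y _ => hxy y trivial
  obtain ⟨h1, h2, h3, h4, h5⟩ := nd_all hred X hX hS hI hnd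
  have hsup := centralizer_sup_range X hX
  have horth := orth_centralizer_range hI X
  have hR := sig_of_le_derived hS hI _ (range_le_derived X) h4
  have hd := sig_of_le_derived hS hI _ (derivedOf_mono (V := centralizerOf g {X}) le_top) h2
  have e1 := finrank_sup_of (LinearMap.range (LieAlgebra.ad ℂ g X)) (centralizerOf g {X})
    (fun x hx hx' => h4 x hx fun y hy => horth x hx' y hy)
  have e2 := finrank_sup_of (derivedOf g (centralizerOf g {X})) (centerIn g (centralizerOf g {X}))
    (fun x hx hx' => h2 x hx fun y hy => orth_center_derived hI _ x hx' y hy)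
  rw [sup_comm, hsup, finrank_top] at e1
  rw [h5] at e2
  have hl : Sig B ((centralizerOf g {X}).restrictScalars ℝ) (finrank ℂ (centralizerOf g {X}))
      (finrank ℂ (centralizerOf g {X})) := by
    refine sig_sub hS (W := ⊤) ?_ (fun x hx y hy => by rw [hS]; exact horth y hy x hx) hR ?_
      (finrank_restrict _)
    · rw [sup_restrict, sup_comm, hsup]; rfl
    · rw [← e1]; exact hsig'
  have ha : Sig B ((centerIn g (centralizerOf g {X})).restrictScalars ℝ)
      (finrank ℂ (centerIn g (centralizerOf g {X})))
      (finrank ℂ (centerIn g (centralizerOf g {X}))) := by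
    refine sig_sub hS (W := (centralizerOf g {X}).restrictScalars ℝ) ?_
      (fun x hx y hy => by rw [hS]; exact orth_center_derived hI _ y hy x hx) hd ?_
      (finrank_restrict _)
    · rw [sup_restrict, h5]
    · rw [← e2]; exact hl
  exact ⟨⟨fun x _ y _ => hS x y, fun z _ x _ y _ => hI z x y, hl⟩,
    ⟨fun x _ y _ => hS x y, fun z _ x _ y _ => hI z x y, hd⟩,
    ⟨fun x _ y _ => hS x y, fun z _ x _ y _ => hI z x y, ha⟩⟩

lemma centralizer_zero : centralizerOf g {(0 : g)} = ⊤ := by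
  rw [eq_top_iff]
  intro x _ y hy
  rw [Set.mem_singleton_iff.1 hy, lie_zero]

lemma ad_zero_semisimple : (LieAlgebra.ad ℂ g (0 : g)).IsSemisimple := by
  rw [map_zero]
  exact Module.End.isSemisimple_zero

lemma real_iff (hred : IsReductive g) (hS : RSymm g B) (hI : RInvariant g B) :
    RealManinForm g B ↔
        (RealManinFormOn g B (derivedOf g ⊤) ∧ RealManinFormOn g B (centerIn g ⊤)) := by
  constructor
  · intro h
    have := sig_all hred 0 ad_zero_semisimple h
    rw [centralizer_zero] at this
    exact this.2
  · rintro ⟨⟨-, -, h1⟩, ⟨-, -, h2⟩⟩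
    refine ⟨hS, hI, ?_⟩
    have hz : Sig B ((centerIn g ⊤).restrictScalars ℝ) _ _ := h2
    have hsup := center_sup_derived hred
    have e := finrank_sup_of (centerIn g (⊤ : Submodule ℂ g)) (derivedOf g (⊤ : Submodule ℂ g))
      (fun x hx hx' => hz.nd hS x hx fun y hy => by
        rw [hS]; exact orth_center_derived hI _ y hy x hx')
    rw [hsup, finrank_top] at e
    rw [e]
    refine sig_sup hS ?_ (fun x hx y hy => orth_center_derived hI ⊤ x hx y hy) h2 h1
    rw [sup_restrict, hsup]; rfl

end RealInvariant

section ComplexForms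

set_option linter.unusedSectionVars false

variable {g}

/-- The real part of a complex bilinear form. -/
noncomputable def reForm (B : g →ₗ[ℂ] g →ₗ[ℂ] ℂ) : g →ₗ[ℝ] g →ₗ[ℝ] ℝ :=
  LinearMap.mk₂ ℝ (fun x y => (B x y).re)
    (fun x y z => by simp)
    (fun c x y => by
      rw [LinearMap.map_smul_of_tower, LinearMap.smul_apply]; simp)
    (fun x y z => by simp)
    (fun c x y => by
      rw [LinearMap.map_smul_of_tower]; simp)

lemma reForm_apply (B : g →ₗ[ℂ] g →ₗ[ℂ] ℂ) (x y : g) : reForm B x y = (B x y).re := rfl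

lemma reForm_symm {B : g →ₗ[ℂ] g →ₗ[ℂ] ℂ} (h : CSymm g B) : RSymm g (reForm B) := by
  intro x y
  rw [reForm_apply, reForm_apply, h]

lemma reForm_inv {B : g →ₗ[ℂ] g →ₗ[ℂ] ℂ} (h : CInvariant g B) : RInvariant g (reForm B) := by
  intro x y z
  rw [reForm_apply, reForm_apply, ← Complex.add_re, h, Complex.zero_re]

lemma nondeg_iff (B : g →ₗ[ℂ] g →ₗ[ℂ] ℂ) (W : Submodule ℂ g) :
    CNondegOn g B W ↔ RNondegOn g (reForm B) W := by
  constructor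
  · intro h x hx hxy
    apply h x hx
    intro y hy
    apply Complex.ext
    · exact hxy y hy
    · have := hxy _ (W.smul_mem Complex.I hy)
      rw [reForm_apply, map_smul] at this
      simpa using this
  · intro h x hx hxy
    apply h x hx
    intro y hy
    rw [reForm_apply, hxy y hy, Complex.zero_re]

lemma nondeg_univ_iff (B : g →ₗ[ℂ] g →ₗ[ℂ] ℂ) :
    CNondegOn g B Set.univ ↔ RNondegOn g (reForm B) Set.univ := by
  have := nondeg_iff B ⊤
  rwa [Submodule.top_coe] at this

lemma complex_nd {B : g →ₗ[ℂ] g →ₗ[ℂ] ℂ} (hred : IsReductive g) (X : g)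
    (hX : (LieAlgebra.ad ℂ g X).IsSemisimple) (hS : CSymm g B) (hI : CInvariant g B)
    (hnd : CNondegOn g B Set.univ) :
    CNondegOn g B (centralizerOf g {X}) ∧
      CNondegOn g B (derivedOf g (centralizerOf g {X})) ∧
      CNondegOn g B (centerIn g (centralizerOf g {X})) := by
  rw [nondeg_iff, nondeg_iff, nondeg_iff]
  obtain ⟨h1, h2, h3, -⟩ := nd_all hred X hX (reForm_symm hS) (reForm_inv hI)
    ((nondeg_univ_iff B).1 hnd)
  exact ⟨h1, h2, h3⟩

lemma complex_manin {B : g →ₗ[ℂ] g →ₗ[ℂ] ℂ} (hred : IsReductive g) (X : g)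
    (hX : (LieAlgebra.ad ℂ g X).IsSemisimple) (hB : ComplexManinForm g B) :
    ComplexManinFormOn g B (centralizerOf g {X}) ∧
      ComplexManinFormOn g B (derivedOf g (centralizerOf g {X})) ∧
      ComplexManinFormOn g B (centerIn g (centralizerOf g {X})) := by
  obtain ⟨hS, hI, hnd⟩ := hB
  obtain ⟨h1, h2, h3⟩ := complex_nd hred X hX hS hI hnd
  exact ⟨⟨fun x _ y _ => hS x y, fun z _ x _ y _ => hI z x y, h1⟩,
    ⟨fun x _ y _ => hS x y, fun z _ x _ y _ => hI z x y, h2⟩,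
    ⟨fun x _ y _ => hS x y, fun z _ x _ y _ => hI z x y, h3⟩⟩

lemma complex_iff {B : g →ₗ[ℂ] g →ₗ[ℂ] ℂ} (hred : IsReductive g) (hS : CSymm g B)
    (hI : CInvariant g B) :
    ComplexManinForm g B ↔
        (ComplexManinFormOn g B (derivedOf g ⊤) ∧ ComplexManinFormOn g B (centerIn g ⊤)) := by
  constructor
  · intro h
    have := complex_manin hred 0 ad_zero_semisimple h
    rw [centralizer_zero] at this
    exact this.2
  · rintro ⟨⟨-, -, h1⟩, ⟨-, -, h2⟩⟩
    refine ⟨hS, hI, ?_⟩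
    rw [nondeg_iff] at h1 h2
    rw [nondeg_univ_iff]
    have hS' := reForm_symm hS
    have ho := orth_center_derived (reForm_inv hI) ⊤
    intro x _ hxy
    obtain ⟨a, ha, b, hb, rfl⟩ := Submodule.mem_sup.1
      (show x ∈ centerIn g ⊤ ⊔ derivedOf g ⊤ by rw [center_sup_derived hred]; trivial)
    have ha0 : a = 0 := h2 a ha fun y hy => by
      have := hxy y trivial
      rwa [map_add, LinearMap.add_apply, hS' b, ho y hy b hb, add_zero] at this
    have hb0 : b = 0 := h1 b hb fun y hy => by
      have := hxy y trivial
      rwa [map_add, LinearMap.add_apply, ho a ha y hy, zero_add] at this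
    simp [ha0, hb0]

end ComplexForms

/-- Corollary of Lemma 2, Delorme.
Let `g` be complex reductive, `X ∈ g` semisimple with `ad X` having only real eigenvalues,
`l` its centralizer, `a` the centre of `l` and `l^der` the derived ideal of `l`.
(i) The restriction of a nondegenerate symmetric invariant `ℝ`- (resp. `ℂ`-) bilinear form
to `l`, `l^der` and `a` is nondegenerate.
(ii) The restriction of a real (resp. complex) Manin form to `l`, `l^der` and `a` is a
Manin form.
(iii) A symmetric invariant form is a Manin form iff its restrictions to `g^der` and to
the centre of `g` are Manin forms. -/
theorem manin_form_restriction_to_centralizer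
    (g : Type*) [LieRing g] [LieAlgebra ℝ g] [LieAlgebra ℂ g] [IsScalarTower ℝ ℂ g]
    [FiniteDimensional ℂ g] [FiniteDimensional ℝ g]
    (hred : IsReductive g)
    (X : g)
    (hXss : (LieAlgebra.ad ℂ g X).IsSemisimple)
    (hXreal : ∀ c : ℂ, (LieAlgebra.ad ℂ g X).HasEigenvalue c → c.im = 0) :
    -- (i), real and complex versions
    (∀ B : g →ₗ[ℝ] g →ₗ[ℝ] ℝ, RSymm g B → RInvariant g B → RNondegOn g B Set.univ →
      RNondegOn g B (centralizerOf g {X}) ∧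
      RNondegOn g B (derivedOf g (centralizerOf g {X})) ∧
      RNondegOn g B (centerIn g (centralizerOf g {X}))) ∧
    (∀ B : g →ₗ[ℂ] g →ₗ[ℂ] ℂ, CSymm g B → CInvariant g B → CNondegOn g B Set.univ →
      CNondegOn g B (centralizerOf g {X}) ∧
      CNondegOn g B (derivedOf g (centralizerOf g {X})) ∧
      CNondegOn g B (centerIn g (centralizerOf g {X}))) ∧
    -- (ii), real and complex versions
    (∀ B : g →ₗ[ℝ] g →ₗ[ℝ] ℝ, RealManinForm g B →
      RealManinFormOn g B (centralizerOf g {X}) ∧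
      RealManinFormOn g B (derivedOf g (centralizerOf g {X})) ∧
      RealManinFormOn g B (centerIn g (centralizerOf g {X}))) ∧
    (∀ B : g →ₗ[ℂ] g →ₗ[ℂ] ℂ, ComplexManinForm g B →
      ComplexManinFormOn g B (centralizerOf g {X}) ∧
      ComplexManinFormOn g B (derivedOf g (centralizerOf g {X})) ∧
      ComplexManinFormOn g B (centerIn g (centralizerOf g {X}))) ∧
    -- (iii), real and complex versions
    (∀ B : g →ₗ[ℝ] g →ₗ[ℝ] ℝ, RSymm g B → RInvariant g B →
      (RealManinForm g B ↔
        (RealManinFormOn g B (derivedOf g ⊤) ∧ RealManinFormOn g B (centerIn g ⊤)))) ∧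
    (∀ B : g →ₗ[ℂ] g →ₗ[ℂ] ℂ, CSymm g B → CInvariant g B →
      (ComplexManinForm g B ↔
        (ComplexManinFormOn g B (derivedOf g ⊤) ∧ ComplexManinFormOn g B (centerIn g ⊤)))) := by
  refine ⟨?_, ?_, ?_, ?_, ?_, ?_⟩
  · intro B hS hI hnd
    obtain ⟨h1, h2, h3, -⟩ := nd_all hred X hXss hS hI hnd
    exact ⟨h1, h2, h3⟩
  · intro B hS hI hnd
    exact complex_nd hred X hXss hS hI hnd
  · intro B hB
    exact sig_all hred X hXss hB
  · intro B hB
    exact complex_manin hred X hXss hB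
  · intro B hS hI
    exact real_iff hred hS hI
  · intro B hS hI
    exact complex_iff hred hS hI

end ManinPaper
end
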